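/- Assume ς² < ∞ and liminf_{T→∞} Var(T)/T = ∞. Then for α ∈ [1,2) and h slowly varying at infinity: Var(T) ~ T^α h(T) as T → ∞ if and only if ν(U_x) ~ C(α)·x^{2−α}·h(1/x) as x → 0⁺. -/

import Mathlib

open MeasureTheory Filter Topology Set

/-- A function `h : (0,∞) → (0,∞)` is slowly varying at infinity: positive and
continuous on `(0,∞)` with `h(st)/h(t) → 1` as `t → ∞` for every `s > 0`. -/
def SlowlyVaryingAtTop (h : ℝ → ℝ) : Prop :=
  (∀ t > 0, 0 < h t) ∧ ContinuousOn h (Set.Ioi 0) ∧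
    ∀ s > 0, Tendsto (fun t => h (s * t) / h t) atTop (𝓝 1)

/-- `C(α) = Γ(1+α) sin(απ/2) / (π(2-α))`. -/
noncomputable def Cconst (α : ℝ) : ℝ :=
  Real.Gamma (1 + α) * Real.sin (α * Real.pi / 2) / (Real.pi * (2 - α))

/-- The continuous-time variance
`Var(T) = 2 ∫_{H⁻} Re[(e^{zT}-zT-1)/z²] ν(dz)`. -/
noncomputable def VarCt (ν : Measure ℂ) (T : ℝ) : ℝ :=
  2 * ∫ z, ((Complex.exp (z * (T : ℂ)) - z * (T : ℂ) - 1) / z ^ 2).re ∂ν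

/-- `ς² = -2 ∫_{H⁻} Re(1/z) ν(dz) ∈ [0,∞]`. -/
noncomputable def varsigmaSq (ν : Measure ℂ) : ENNReal :=
  2 * ∫⁻ z, ENNReal.ofReal (-(z⁻¹.re)) ∂ν

/-- `U_x = {a + ib : 0 ≤ -a ≤ |b| ≤ x}`. -/
def UsetCt (x : ℝ) : Set ℂ :=
  {z : ℂ | 0 ≤ -z.re ∧ -z.re ≤ |z.im| ∧ |z.im| ≤ x}

/-!
Off the cone `|Re z| ≤ |Im z|` the variance kernel is `O(T |Re z⁻¹|)`, and on it the kernel differs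
from its value at `i Im z` by as much. Since `ς² < ∞`, the variance is, up to `O(T)`, twice
`∫ (1 - cos (T u)) / u ² dμ(u)`, where `μ` is the image of `ν` on the cone under `Im`; this error is
negligible because `Var(T) / T → ∞`. Rescaling `u` to `T u`, the asymptotics of the integral become
the convergence of transforms of measures `μ_T`, and those of `ν(U_x)` the convergence of
`μ_T [-1, 1]`.

Tauberian direction: second differences in `t` turn `(1 - cos (t u)) / u ²` into
`cos (t u) (1 - cos (s u)) / u ²`, and averaging over `s` against `e^{-s}` into
`cos (t u) / (1 + u ²)`. So the cosine transforms of the measures `μ_T / (1 + u ²)` converge (a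
Baire argument supplies the domination), and Lévy's continuity theorem gives weak convergence of
their images under `|·|` to a multiple of `u^{1 - α} du / (1 + u ²)` on `(0, ∞)`. Abelian direction:
the layer cake formula expresses the weighted measures through the masses `μ_T [-x, x]`, which
Potter bounds dominate.
-/

section

open scoped NNReal ENNReal BoundedContinuousFunction

/-! ### Regular variation -/

/-- Regular variation at infinity with index `ρ`: only values at large arguments matter, and `f`
need be neither measurable nor continuous. -/
def IsRegularlyVarying (f : ℝ → ℝ) (ρ : ℝ) : Prop :=
  (∀ᶠ t in atTop, 0 < f t) ∧ ∀ s > 0, Tendsto (fun t => f (s * t) / f t) atTop (𝓝 (s ^ ρ))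

theorem SlowlyVaryingAtTop.isRegularlyVarying {h : ℝ → ℝ} (hh : SlowlyVaryingAtTop h) :
    IsRegularlyVarying h 0 :=
  ⟨(eventually_gt_atTop 0).mono hh.1, by simpa only [Real.rpow_zero] using hh.2.2⟩

theorem isRegularlyVarying_rpow (ρ : ℝ) : IsRegularlyVarying (fun t => t ^ ρ) ρ := by
  refine ⟨(eventually_gt_atTop 0).mono fun t ht => Real.rpow_pos_of_pos ht ρ, fun s hs => ?_⟩
  refine tendsto_const_nhds.congr' ?_
  filter_upwards [eventually_gt_atTop 0] with t ht
  rw [Real.mul_rpow hs.le ht.le, mul_div_cancel_right₀ _ (Real.rpow_pos_of_pos ht ρ).ne']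

theorem IsRegularlyVarying.mul {f g : ℝ → ℝ} {ρ σ : ℝ} (hf : IsRegularlyVarying f ρ)
    (hg : IsRegularlyVarying g σ) : IsRegularlyVarying (fun t => f t * g t) (ρ + σ) := by
  refine ⟨by filter_upwards [hf.1, hg.1] with t using mul_pos, fun s hs => ?_⟩
  simpa only [mul_div_mul_comm, Real.rpow_add hs] using (hf.2 s hs).mul (hg.2 s hs)

theorem IsRegularlyVarying.tendsto_comp_mul_div {f g : ℝ → ℝ} {ρ c : ℝ}
    (hf : IsRegularlyVarying f ρ) (hg : Tendsto (fun t => g t / f t) atTop (𝓝 c)) {s : ℝ}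
    (hs : 0 < s) : Tendsto (fun t => g (s * t) / f t) atTop (𝓝 (c * s ^ ρ)) := by
  have hst : Tendsto (fun t => s * t) atTop atTop := tendsto_id.const_mul_atTop hs
  refine ((hg.comp hst).mul (hf.2 s hs)).congr' ?_
  filter_upwards [hst.eventually hf.1] with t ht
  exact div_mul_div_cancel₀ ht.ne'

/-! ### Integrals with values in the Gamma function -/

theorem integral_integral_swap_of_nonneg {X Y : Type*} [MeasurableSpace X] [MeasurableSpace Y]
    {μ : Measure X} {ν : Measure Y} [SFinite μ] [SFinite ν] {f : X → Y → ℝ}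
    (hf : AEStronglyMeasurable (Function.uncurry f) (μ.prod ν))
    (hf0 : 0 ≤ᵐ[μ.prod ν] Function.uncurry f) (hx : ∀ᵐ x ∂μ, Integrable (f x) ν)
    (hy : ∀ᵐ y ∂ν, Integrable (fun x => f x y) μ) :
    ∫ x, ∫ y, f x y ∂ν ∂μ = ∫ y, ∫ x, f x y ∂μ ∂ν := by
  by_cases hint : Integrable (Function.uncurry f) (μ.prod ν)
  · exact integral_integral_swap hint
  have hf0' : ∀ᵐ p ∂ν.prod μ, 0 ≤ f p.2 p.1 :=
    Measure.measurePreserving_swap.quasiMeasurePreserving.ae hf0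
  have hnorm : (fun x => ∫ y, f x y ∂ν) =ᵐ[μ] fun x => ∫ y, ‖f x y‖ ∂ν := by
    filter_upwards [Measure.ae_ae_of_ae_prod hf0] with x h
    exact integral_congr_ae (h.mono fun y hy => (Real.norm_of_nonneg hy).symm)
  have hnorm' : (fun y => ∫ x, f x y ∂μ) =ᵐ[ν] fun y => ∫ x, ‖f x y‖ ∂μ := by
    filter_upwards [Measure.ae_ae_of_ae_prod hf0'] with y h
    exact integral_congr_ae (h.mono fun x hx => (Real.norm_of_nonneg hx).symm)
  rw [integral_undef fun h => hint ((integrable_prod_iff hf).2 ⟨hx, h.congr hnorm⟩),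
    integral_undef fun h => hint ((integrable_prod_iff' hf).2 ⟨hy, h.congr hnorm'⟩)]

theorem integral_Ioi_integral_Ioi_swap_of_nonneg {f : ℝ → ℝ → ℝ}
    (hf : Measurable (Function.uncurry f)) (hf0 : ∀ x > 0, ∀ y > 0, 0 ≤ f x y)
    (hx : ∀ x > 0, IntegrableOn (f x) (Ioi 0))
    (hy : ∀ y > 0, IntegrableOn (fun x => f x y) (Ioi 0)) :
    ∫ x in Ioi 0, ∫ y in Ioi 0, f x y = ∫ y in Ioi 0, ∫ x in Ioi 0, f x y := by
  refine integral_integral_swap_of_nonneg hf.aestronglyMeasurable ?_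
    ((ae_restrict_mem measurableSet_Ioi).mono hx) ((ae_restrict_mem measurableSet_Ioi).mono hy)
  rw [Measure.prod_restrict]
  filter_upwards [ae_restrict_mem (measurableSet_Ioi.prod measurableSet_Ioi)] with p hp
  exact hf0 p.1 hp.1 p.2 hp.2

theorem integrableOn_exp_neg_mul_mul_cos {t : ℝ} (ht : 0 < t) (u : ℝ) :
    IntegrableOn (fun s => Real.exp (-(t * s)) * Real.cos (u * s)) (Ioi 0) := by
  have h := integrableOn_exp_mul_complex_Ioi (a := -t + u * Complex.I) (by simpa using ht) 0
  simpa [Complex.exp_re] using! h.re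

theorem integral_exp_neg_mul_mul_cos {t : ℝ} (ht : 0 < t) (u : ℝ) :
    ∫ s in Ioi 0, Real.exp (-(t * s)) * Real.cos (u * s) = t / (t ^ 2 + u ^ 2) := by
  have hre : (-t + u * Complex.I : ℂ).re < 0 := by simpa using ht
  have h := congrArg Complex.re (integral_exp_mul_complex_Ioi hre 0)
  rw [← RCLike.re_to_complex, ← integral_re (integrableOn_exp_mul_complex_Ioi hre 0)] at h
  have hexp (s : ℝ) : (Complex.exp ((-t + u * Complex.I) * s)).re =
      Real.exp (-(t * s)) * Real.cos (u * s) := by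
    simp [Complex.exp_re]
  simp only [RCLike.re_to_complex, hexp] at h
  rw [h]
  simp [Complex.div_re, Complex.normSq_apply, sq]

theorem integrableOn_exp_neg_mul {t : ℝ} (ht : 0 < t) :
    IntegrableOn (fun s => Real.exp (-(t * s))) (Ioi 0) := by
  simpa using integrableOn_exp_neg_mul_mul_cos ht 0

theorem integral_exp_neg_mul {t : ℝ} (ht : 0 < t) :
    ∫ s in Ioi 0, Real.exp (-(t * s)) = t⁻¹ := by
  simpa [sq] using integral_exp_neg_mul_mul_cos ht 0

theorem integral_rpow_mul_exp_neg_one_add_sq_mul {α x : ℝ} (hα : 0 < α) (hx : 0 < x) :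
    ∫ t in Ioi 0, t ^ (α - 1) * Real.exp (-((1 + t ^ 2) * x)) =
      Real.Gamma (α / 2) / 2 * (x ^ (1 - α / 2 - 1) * Real.exp (-(1 * x))) := by
  have hsplit : ∀ t ∈ Ioi (0 : ℝ), t ^ (α - 1) * Real.exp (-((1 + t ^ 2) * x)) =
      Real.exp (-x) * (t ^ (α - 1) * Real.exp (-x * t ^ (2 : ℝ))) := by
    intro t _
    rw [mul_left_comm, ← Real.exp_add, Real.rpow_two]
    ring_nf
  rw [setIntegral_congr_fun measurableSet_Ioi hsplit, integral_const_mul,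
    integral_rpow_mul_exp_neg_mul_rpow two_pos (by linarith) hx,
    show -(α - 1 + 1) / 2 = 1 - α / 2 - 1 by ring, sub_add_cancel]
  ring_nf

theorem integral_rpow_div_one_add_sq {α : ℝ} (hα : α ∈ Ioo 0 2) :
    ∫ t in Ioi 0, t ^ (α - 1) / (1 + t ^ 2) = Real.pi / (2 * Real.sin (α * Real.pi / 2)) := by
  have hα0 : 0 < α / 2 := half_pos hα.1
  have hα1 : 0 < 1 - α / 2 := by linarith [hα.2]
  have hpos (t : ℝ) : 0 < 1 + t ^ 2 := by positivity
  calc ∫ t in Ioi 0, t ^ (α - 1) / (1 + t ^ 2)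
      = ∫ t in Ioi 0, ∫ x in Ioi 0, t ^ (α - 1) * Real.exp (-((1 + t ^ 2) * x)) := by
        simp only [integral_const_mul, integral_exp_neg_mul (hpos _), div_eq_mul_inv]
    _ = ∫ x in Ioi 0, ∫ t in Ioi 0, t ^ (α - 1) * Real.exp (-((1 + t ^ 2) * x)) := by
        refine integral_Ioi_integral_Ioi_swap_of_nonneg (by fun_prop)
          (fun t ht x _ => by positivity)
          (fun t _ => (integrableOn_exp_neg_mul (hpos t)).const_mul _) fun x hx => ?_
        refine Integrable.of_integral_ne_zero ?_
        rw [integral_rpow_mul_exp_neg_one_add_sq_mul hα.1 hx]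
        positivity
    _ = Real.Gamma (α / 2) / 2 *
          ∫ x in Ioi 0, x ^ (1 - α / 2 - 1) * Real.exp (-(1 * x)) := by
        rw [← integral_const_mul]
        exact setIntegral_congr_fun measurableSet_Ioi fun x hx =>
          integral_rpow_mul_exp_neg_one_add_sq_mul hα.1 hx
    _ = Real.Gamma (α / 2) * Real.Gamma (1 - α / 2) / 2 := by
        rw [Real.integral_rpow_mul_exp_neg_mul_Ioi hα1 one_pos, div_one, Real.one_rpow]
        ring
    _ = Real.pi / (2 * Real.sin (α * Real.pi / 2)) := by
        rw [Real.Gamma_mul_Gamma_one_sub]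
        ring_nf

theorem sin_mul_pi_div_two_pos {α : ℝ} (hα : α ∈ Ioo 0 2) : 0 < Real.sin (α * Real.pi / 2) :=
  Real.sin_pos_of_pos_of_lt_pi (by have := hα.1; positivity) (by nlinarith [hα.2, Real.pi_pos])

theorem integral_one_sub_cos_mul_rpow_mul_exp_neg (α : ℝ) {t : ℝ} (ht : 0 < t) :
    IntegrableOn (fun u => (1 - Real.cos u) * (t ^ α * Real.exp (-(u * t)))) (Ioi 0) ∧
      ∫ u in Ioi 0, (1 - Real.cos u) * (t ^ α * Real.exp (-(u * t))) =
        t ^ (α - 1) / (1 + t ^ 2) := by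
  have hexp := integrableOn_exp_neg_mul ht
  have hcos := integrableOn_exp_neg_mul_mul_cos ht 1
  have hsplit : (fun u => (1 - Real.cos u) * (t ^ α * Real.exp (-(u * t)))) =
      fun u => t ^ α * (Real.exp (-(t * u)) - Real.exp (-(t * u)) * Real.cos (1 * u)) := by
    ext u
    rw [mul_comm u t, one_mul]
    ring
  rw [hsplit]
  refine ⟨(hexp.sub hcos).const_mul _, ?_⟩
  rw [integral_const_mul, integral_sub hexp hcos, integral_exp_neg_mul ht,
    integral_exp_neg_mul_mul_cos ht, Real.rpow_sub_one ht.ne']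
  field_simp
  ring

theorem integral_one_sub_cos_mul_rpow {α : ℝ} (hα : α ∈ Ioo 0 2) :
    ∫ u in Ioi 0, (1 - Real.cos u) * u ^ (-1 - α) =
      Real.pi / (2 * Real.Gamma (1 + α) * Real.sin (α * Real.pi / 2)) := by
  have hα1 : 0 < 1 + α := by linarith [hα.1]
  have hsin := sin_mul_pi_div_two_pos hα
  have hrpow (u : ℝ) (hu : 0 < u) :
      ∫ t in Ioi 0, t ^ α * Real.exp (-(u * t)) = Real.Gamma (1 + α) * u ^ (-1 - α) := by
    have h := Real.integral_rpow_mul_exp_neg_mul_Ioi hα1 hu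
    rwa [add_sub_cancel_left, one_div, Real.inv_rpow hu.le, ← Real.rpow_neg hu.le, neg_add',
      mul_comm] at h
  have hint (u : ℝ) (hu : 0 < u) : IntegrableOn (fun t => t ^ α * Real.exp (-(u * t))) (Ioi 0) :=
    Integrable.of_integral_ne_zero (by rw [hrpow u hu]; positivity)
  have key : Real.Gamma (1 + α) * ∫ u in Ioi 0, (1 - Real.cos u) * u ^ (-1 - α) =
      Real.pi / (2 * Real.sin (α * Real.pi / 2)) :=
    calc _ = ∫ u in Ioi 0, ∫ t in Ioi 0, (1 - Real.cos u) * (t ^ α * Real.exp (-(u * t))) := by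
          rw [← integral_const_mul]
          refine setIntegral_congr_fun measurableSet_Ioi fun u hu => ?_
          simp only [integral_const_mul, hrpow u hu]
          ring
      _ = ∫ t in Ioi 0, ∫ u in Ioi 0, (1 - Real.cos u) * (t ^ α * Real.exp (-(u * t))) :=
          integral_Ioi_integral_Ioi_swap_of_nonneg (by fun_prop)
            (fun u _ t ht => mul_nonneg (sub_nonneg.2 (Real.cos_le_one u)) (by positivity))
            (fun u hu => (hint u hu).const_mul _)
            fun t ht => (integral_one_sub_cos_mul_rpow_mul_exp_neg α ht).1
      _ = ∫ t in Ioi 0, t ^ (α - 1) / (1 + t ^ 2) :=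
          setIntegral_congr_fun measurableSet_Ioi fun t ht =>
            (integral_one_sub_cos_mul_rpow_mul_exp_neg α ht).2
      _ = _ := integral_rpow_div_one_add_sq hα
  field_simp at key ⊢
  linarith

/-! ### The kernel `(1 - cos (t u)) / u²` and its transform -/

/-- The kernel `(1 - cos (t u)) / u ^ 2`, extended continuously by `t ^ 2 / 2` to `u = 0`. -/
noncomputable def cosKernel (t u : ℝ) : ℝ := t ^ 2 / 2 * Real.sinc (t * u / 2) ^ 2

theorem cosKernel_mul_sq (t u : ℝ) : cosKernel t u * u ^ 2 = 1 - Real.cos (t * u) := by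
  rcases eq_or_ne (t * u / 2) 0 with h | h
  · have htu : t * u = 0 := by simpa using h
    rcases mul_eq_zero.1 htu with rfl | rfl <;> simp [cosKernel]
  · have hcos : Real.cos (t * u) = 1 - 2 * Real.sin (t * u / 2) ^ 2 := by
      rw [← mul_div_cancel₀ (t * u) two_ne_zero, mul_div_assoc, Real.cos_two_mul, Real.cos_sq']
      ring_nf
    have htu : t * u ≠ 0 := fun h0 => h (by rw [h0, zero_div])
    rw [cosKernel, Real.sinc_of_ne_zero h, hcos]
    field_simp [left_ne_zero_of_mul htu, right_ne_zero_of_mul htu]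
    ring

theorem cosKernel_of_ne_zero (t : ℝ) {u : ℝ} (hu : u ≠ 0) :
    cosKernel t u = (1 - Real.cos (t * u)) / u ^ 2 := by
  rw [← cosKernel_mul_sq, mul_div_cancel_right₀ _ (pow_ne_zero 2 hu)]

theorem cosKernel_zero_right (t : ℝ) : cosKernel t 0 = t ^ 2 / 2 := by simp [cosKernel]

theorem cosKernel_nonneg (t u : ℝ) : 0 ≤ cosKernel t u := by unfold cosKernel; positivity

theorem cosKernel_neg_left (t u : ℝ) : cosKernel (-t) u = cosKernel t u := by
  simp [cosKernel, neg_div]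

theorem cosKernel_neg_right (t u : ℝ) : cosKernel t (-u) = cosKernel t u := by
  simp [cosKernel, neg_div]

theorem continuous_cosKernel : Continuous (Function.uncurry cosKernel) := by
  unfold cosKernel Function.uncurry; fun_prop

theorem continuous_cosKernel_left (u : ℝ) : Continuous fun t => cosKernel t u :=
  continuous_cosKernel.comp (Continuous.prodMk_left u)

theorem continuous_cosKernel_right (t : ℝ) : Continuous (cosKernel t) :=
  continuous_cosKernel.comp (Continuous.prodMk_right t)

theorem cosKernel_mul_left (l T b : ℝ) : cosKernel (l * T) b = T ^ 2 * cosKernel l (b * T) := by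
  unfold cosKernel
  ring_nf

theorem cosKernel_mul_one_add_sq_le (t u : ℝ) : cosKernel t u * (1 + u ^ 2) ≤ 2 + t ^ 2 := by
  have hsinc : Real.sinc (t * u / 2) ^ 2 ≤ 1 :=
    (sq_le_one_iff_abs_le_one _).2 (Real.abs_sinc_le_one _)
  have hle : cosKernel t u ≤ t ^ 2 / 2 := mul_le_of_le_one_right (by positivity) hsinc
  linarith [cosKernel_mul_sq t u, Real.neg_one_le_cos (t * u), sq_nonneg t]

theorem cosKernel_le (t u : ℝ) : cosKernel t u ≤ (2 + t ^ 2) * (1 + u ^ 2)⁻¹ :=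
  (le_mul_inv_iff₀ (by positivity)).2 (cosKernel_mul_one_add_sq_le t u)

theorem cosKernel_second_difference (s t u : ℝ) :
    (cosKernel (s + t) u + cosKernel (s - t) u) / 2 - cosKernel t u =
      Real.cos (t * u) * cosKernel s u := by
  rcases eq_or_ne u 0 with rfl | hu
  · simp only [cosKernel_zero_right, mul_zero, Real.cos_zero]
    ring
  · simp only [cosKernel_of_ne_zero _ hu, add_mul, sub_mul, Real.cos_add, Real.cos_sub]
    ring

theorem cosKernel_add_le (s t u : ℝ) :
    cosKernel (s + t) u ≤ 2 * cosKernel s u + 2 * cosKernel t u := by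
  have hcos : Real.cos (t * u) * cosKernel s u ≤ cosKernel s u :=
    mul_le_of_le_one_left (cosKernel_nonneg s u) (Real.cos_le_one _)
  linarith [cosKernel_second_difference s t u, cosKernel_nonneg (s - t) u]

theorem integrableOn_exp_neg_mul_pow (n : ℕ) :
    IntegrableOn (fun s : ℝ => Real.exp (-s) * s ^ n) (Ioi 0) := by
  simpa using Real.GammaIntegral_convergent (s := n + 1) (by positivity)

theorem integral_exp_neg_mul_cosKernel (u : ℝ) :
    ∫ s in Ioi 0, Real.exp (-s) * cosKernel s u = (1 + u ^ 2)⁻¹ := by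
  rcases eq_or_ne u 0 with rfl | hu
  · have hΓ : ∫ s in Ioi 0, Real.exp (-s) * s ^ 2 = 2 := by
      have h := Real.Gamma_eq_integral (s := (2 : ℕ) + 1) (by positivity)
      rw [Real.Gamma_nat_eq_factorial] at h
      simpa using h.symm
    simp_rw [cosKernel_zero_right, ← mul_div_assoc]
    rw [integral_div, hΓ]
    norm_num
  · have hexp : IntegrableOn (fun s => Real.exp (-s)) (Ioi 0) := integrableOn_exp_neg_Ioi 0
    have hcos := integrableOn_exp_neg_mul_mul_cos one_pos u
    have hval := integral_exp_neg_mul_mul_cos one_pos u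
    simp only [one_mul] at hcos hval
    simp_rw [cosKernel_of_ne_zero _ hu, ← mul_div_assoc, mul_one_sub, mul_comm _ u]
    rw [integral_div, integral_sub hexp hcos, hval, integral_exp_neg_Ioi_zero]
    field_simp
    ring

/-- The measure `m` weighted by `1 / (1 + u ^ 2)`. Measures whose damped version is finite are those
on which every `cosKernel t` is integrable, with infinite mass allowed at infinity. -/
noncomputable def damped (m : Measure ℝ) : Measure ℝ :=
  m.withDensity fun u => ENNReal.ofReal (1 + u ^ 2)⁻¹

/-- The transform `t ↦ ∫ (1 - cos (t u)) / u ^ 2 m(du)`: half of the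
variance at time `t` of a real process with spectral measure `m`. -/
noncomputable def cosTransform (m : Measure ℝ) (t : ℝ) : ℝ := ∫ u, cosKernel t u ∂m

theorem integral_damped (m : Measure ℝ) (f : ℝ → ℝ) :
    ∫ u, f u ∂damped m = ∫ u, (1 + u ^ 2)⁻¹ * f u ∂m := by
  rw [damped, integral_withDensity_eq_integral_toReal_smul (by fun_prop)
    (ae_of_all _ fun _ => ENNReal.ofReal_lt_top)]
  congr with u
  rw [ENNReal.toReal_ofReal (by positivity), smul_eq_mul]

theorem isFiniteMeasure_damped {m : Measure ℝ} (h : Integrable (fun u => (1 + u ^ 2)⁻¹) m) :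
    IsFiniteMeasure (damped m) :=
  isFiniteMeasure_withDensity_ofReal h.2

instance (m : Measure ℝ) [IsFiniteMeasure m] : IsFiniteMeasure (damped m) := by
  refine isFiniteMeasure_damped (Integrable.of_bound (by fun_prop) 1 (ae_of_all _ fun u => ?_))
  rw [Real.norm_of_nonneg (by positivity)]
  exact inv_le_one_of_one_le₀ (by nlinarith)

theorem cosTransform_nonneg (m : Measure ℝ) (t : ℝ) : 0 ≤ cosTransform m t :=
  integral_nonneg fun u => cosKernel_nonneg t u

theorem cosTransform_neg (m : Measure ℝ) (t : ℝ) : cosTransform m (-t) = cosTransform m t := by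
  simp only [cosTransform, cosKernel_neg_left]

theorem cosTransform_eq_integral_damped (m : Measure ℝ) (t : ℝ) :
    cosTransform m t = ∫ u, cosKernel t u * (1 + u ^ 2) ∂damped m := by
  rw [integral_damped, cosTransform]
  congr with u
  field_simp

section Transform

variable (m : Measure ℝ) [IsFiniteMeasure (damped m)]

theorem integrable_inv_one_add_sq_of_damped : Integrable (fun u => (1 + u ^ 2)⁻¹) m := by
  refine ⟨by fun_prop, ?_⟩
  rw [hasFiniteIntegral_iff_ofReal (ae_of_all _ fun u => by positivity), ← setLIntegral_univ,
    ← withDensity_apply _ MeasurableSet.univ]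
  exact measure_lt_top (damped m) univ

theorem integrable_cosKernel (t : ℝ) : Integrable (cosKernel t) m := by
  refine ((integrable_inv_one_add_sq_of_damped m).const_mul (2 + t ^ 2)).mono'
    (continuous_cosKernel_right t).aestronglyMeasurable (ae_of_all _ fun u => ?_)
  rw [Real.norm_of_nonneg (cosKernel_nonneg t u)]
  exact cosKernel_le t u

theorem cosTransform_add_le (s t : ℝ) :
    cosTransform m (s + t) ≤ 2 * cosTransform m s + 2 * cosTransform m t := by
  have hs := (integrable_cosKernel m s).const_mul 2
  have ht := (integrable_cosKernel m t).const_mul 2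
  simp only [cosTransform, ← integral_const_mul, ← integral_add hs ht]
  exact integral_mono (integrable_cosKernel m _) (hs.add ht) fun u => cosKernel_add_le s t u

theorem continuous_cosTransform : Continuous (cosTransform m) := by
  refine continuous_iff_continuousAt.2 fun t => continuousAt_of_dominated
    (bound := fun u => (2 + (|t| + 1) ^ 2) * (1 + u ^ 2)⁻¹)
    (Eventually.of_forall fun s => (continuous_cosKernel_right s).aestronglyMeasurable) ?_
    ((integrable_inv_one_add_sq_of_damped m).const_mul _)
    (ae_of_all _ fun u => (continuous_cosKernel_left u).continuousAt)
  filter_upwards [Metric.ball_mem_nhds t one_pos] with s hs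
  refine ae_of_all _ fun u => ?_
  have hst : |s| ≤ |t| + 1 := by
    linarith [abs_sub_abs_le_abs_sub s t, (Real.dist_eq s t ▸ hs : |s - t| < 1)]
  have hsq : s ^ 2 ≤ (|t| + 1) ^ 2 := sq_le_sq' (by linarith [neg_abs_le s]) (le_of_abs_le hst)
  rw [Real.norm_of_nonneg (cosKernel_nonneg s u)]
  exact (cosKernel_le s u).trans (by gcongr)

theorem integrable_exp_neg_mul_cosKernel [SFinite m] :
    Integrable (fun p : ℝ × ℝ => Real.exp (-p.1) * cosKernel p.1 p.2)
      ((volume.restrict (Ioi 0)).prod m) := by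
  have hexp : IntegrableOn (fun s => Real.exp (-s) * (2 + s ^ 2)) (Ioi 0) := by
    have h := ((integrableOn_exp_neg_mul_pow 0).const_mul 2).add (integrableOn_exp_neg_mul_pow 2)
    refine h.congr (ae_of_all _ fun s => ?_)
    simp only [Pi.add_apply, pow_zero]
    ring
  have hcont : Continuous fun p : ℝ × ℝ => Real.exp (-p.1) * cosKernel p.1 p.2 :=
    (by fun_prop : Continuous fun p : ℝ × ℝ => Real.exp (-p.1)).mul continuous_cosKernel
  refine (hexp.mul_prod (integrable_inv_one_add_sq_of_damped m)).mono'
    hcont.aestronglyMeasurable (ae_of_all _ fun p => ?_)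
  rw [Real.norm_of_nonneg (mul_nonneg (Real.exp_pos _).le (cosKernel_nonneg _ _)), mul_assoc]
  exact mul_le_mul_of_nonneg_left (cosKernel_le p.1 p.2) (Real.exp_pos _).le

theorem integral_cos_mul_cosKernel (s t : ℝ) :
    ∫ u, Real.cos (t * u) * cosKernel s u ∂m =
      (cosTransform m (s + t) + cosTransform m (s - t)) / 2 - cosTransform m t := by
  have hadd := integrable_cosKernel m (s + t)
  have hsub := integrable_cosKernel m (s - t)
  simp only [← cosKernel_second_difference, cosTransform]
  rw [← integral_add hadd hsub, ← integral_div, ← integral_sub _ (integrable_cosKernel m t)]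
  exact (hadd.add hsub).div_const 2

/-- Averaging `cosKernel s` against `exp (-s)` produces the weight of `damped m`, and the symmetric
second difference in `s` with step `t` multiplies the kernel by `cos (t u)`. -/
theorem integral_cos_damped [SFinite m] (t : ℝ) :
    ∫ u, Real.cos (t * u) ∂damped m = ∫ s in Ioi 0, Real.exp (-s) *
      ((cosTransform m (s + t) + cosTransform m (s - t)) / 2 - cosTransform m t) := by
  have hint : Integrable (fun p : ℝ × ℝ => Real.cos (t * p.2) *
      (Real.exp (-p.1) * cosKernel p.1 p.2)) ((volume.restrict (Ioi 0)).prod m) :=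
    (integrable_exp_neg_mul_cosKernel m).bdd_mul (c := 1) (by fun_prop)
      (ae_of_all _ fun p => Real.abs_cos_le_one _)
  calc ∫ u, Real.cos (t * u) ∂damped m
      = ∫ u, (∫ s in Ioi 0, Real.cos (t * u) * (Real.exp (-s) * cosKernel s u)) ∂m := by
        simp only [integral_damped, integral_const_mul, integral_exp_neg_mul_cosKernel]
        simp only [mul_comm]
    _ = ∫ s in Ioi 0, ∫ u, Real.cos (t * u) * (Real.exp (-s) * cosKernel s u) ∂m :=
        (integral_integral_swap hint).symm
    _ = _ := by
        simp only [mul_left_comm _ (Real.exp _), integral_const_mul, integral_cos_mul_cosKernel]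

end Transform

/-! ### Weak convergence of finite measures -/

section WeakConvergence

variable {ι : Type*} {L : Filter ι}

theorem tendsto_finiteMeasure_of_tendsto_normalize {Ω : Type*} [MeasurableSpace Ω]
    [TopologicalSpace Ω] [OpensMeasurableSpace Ω] [Nonempty Ω] {F : ι → FiniteMeasure Ω}
    {F₀ : FiniteMeasure Ω} (hmass : Tendsto (fun i => (F i).mass) L (𝓝 F₀.mass))
    (hnorm : F₀ ≠ 0 → (∀ᶠ i in L, F i ≠ 0) →
      Tendsto (fun i => (F i).normalize) L (𝓝 F₀.normalize)) :
    Tendsto F L (𝓝 F₀) := by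
  rcases eq_or_ne F₀ 0 with rfl | hne
  · exact FiniteMeasure.tendsto_zero_of_tendsto_zero_mass hmass
  · refine (FiniteMeasure.tendsto_normalize_iff_tendsto hne).1 ⟨hnorm hne ?_, hmass⟩
    filter_upwards [hmass.eventually_ne ((FiniteMeasure.mass_nonzero_iff F₀).2 hne)] with i hi
    exact (FiniteMeasure.mass_nonzero_iff (F i)).1 hi

theorem tendsto_finiteMeasure_apply_of_null_frontier {Ω : Type*} [MeasurableSpace Ω]
    [TopologicalSpace Ω] [OpensMeasurableSpace Ω] [HasOuterApproxClosed Ω] [Nonempty Ω]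
    {F : ι → FiniteMeasure Ω} {F₀ : FiniteMeasure Ω} (h : Tendsto F L (𝓝 F₀)) {E : Set Ω}
    (hE : F₀ (frontier E) = 0) : Tendsto (fun i => F i E) L (𝓝 (F₀ E)) := by
  rcases eq_or_ne F₀ 0 with rfl | hne
  · have hmass : Tendsto (fun i => (F i).mass) L (𝓝 0) := h.mass
    exact tendsto_of_tendsto_of_tendsto_of_le_of_le tendsto_const_nhds hmass
      (fun i => zero_le) fun i => (F i).apply_le_mass E
  · obtain ⟨hnorm, hmass⟩ := (FiniteMeasure.tendsto_normalize_iff_tendsto hne).2 h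
    have hE' : F₀.normalize (frontier E) = 0 := by
      rw [FiniteMeasure.normalize_eq_of_nonzero _ hne, hE, mul_zero]
    simpa only [← FiniteMeasure.self_eq_mass_mul_normalize] using
      hmass.mul (ProbabilityMeasure.tendsto_measure_of_null_frontier_of_tendsto hnorm hE')

theorem tendsto_setLIntegral_of_null_frontier {Ω : Type*} [MeasurableSpace Ω]
    [TopologicalSpace Ω] [OpensMeasurableSpace Ω] [HasOuterApproxClosed Ω] [Nonempty Ω]
    {F : ι → FiniteMeasure Ω} {F₀ : FiniteMeasure Ω} (h : Tendsto F L (𝓝 F₀)) (f : Ω →ᵇ ℝ≥0)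
    {E : Set Ω} (hE : MeasurableSet E) (hfr : F₀ (frontier E) = 0) :
    Tendsto (fun i => ∫⁻ u in E, f u ∂(F i : Measure Ω)) L
      (𝓝 (∫⁻ u in E, f u ∂(F₀ : Measure Ω))) := by
  have hf : Measurable fun u => (f u : ℝ≥0∞) := by fun_prop
  let G (H : FiniteMeasure Ω) : FiniteMeasure Ω :=
    ⟨(H : Measure Ω).withDensity fun u => f u,
      isFiniteMeasure_withDensity (f.lintegral_lt_top_of_nnreal _).ne⟩
  have hG : Tendsto (fun i => G (F i)) L (𝓝 (G F₀)) := by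
    rw [FiniteMeasure.tendsto_iff_forall_lintegral_tendsto] at h ⊢
    intro g
    have hmul (H : FiniteMeasure Ω) :
        ∫⁻ u, g u ∂(G H : Measure Ω) = ∫⁻ u, (f * g) u ∂(H : Measure Ω) := by
      refine (lintegral_withDensity_eq_lintegral_mul _ hf (by fun_prop)).trans ?_
      simp
    simpa only [hmul] using h (f * g)
  have hmeas (H : FiniteMeasure Ω) : (G H E : ℝ≥0∞) = ∫⁻ u in E, f u ∂(H : Measure Ω) :=
    (FiniteMeasure.ennreal_coeFn_eq_coeFn_toMeasure (G H) E).trans (withDensity_apply _ hE)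
  have hzero : G F₀ (frontier E) = 0 := by
    rw [FiniteMeasure.null_iff_toMeasure_null] at hfr ⊢
    exact withDensity_absolutelyContinuous _ _ hfr
  have key := ENNReal.tendsto_coe.2 (tendsto_finiteMeasure_apply_of_null_frontier hG hzero)
  simpa only [hmeas] using key

theorem charFun_normalize {E : Type*} [NormedAddCommGroup E] [InnerProductSpace ℝ E]
    [MeasurableSpace E] (F : FiniteMeasure E) (hF : F ≠ 0) (t : E) :
    charFun (F.normalize : Measure E) t = (charFun (F : Measure E) 0)⁻¹ *
      charFun (F : Measure E) t := by
  rw [charFun_apply, FiniteMeasure.toMeasure_normalize_eq_of_nonzero _ hF,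
    integral_smul_nnreal_measure, ← charFun_apply, charFun_zero, NNReal.smul_def,
    Complex.real_smul, NNReal.coe_inv, Complex.ofReal_inv]
  rfl

theorem tendsto_finiteMeasure_of_tendsto_charFun [L.IsCountablyGenerated] {E : Type*}
    [NormedAddCommGroup E] [InnerProductSpace ℝ E] [FiniteDimensional ℝ E] [MeasurableSpace E]
    [BorelSpace E] {F : ι → FiniteMeasure E} {F₀ : FiniteMeasure E}
    (h : ∀ t, Tendsto (fun i => charFun (F i : Measure E) t) L
      (𝓝 (charFun (F₀ : Measure E) t))) :
    Tendsto F L (𝓝 F₀) := by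
  have hmass (G : FiniteMeasure E) : ((G.mass : ℝ) : ℂ) = charFun (G : Measure E) 0 :=
    (charFun_zero (G : Measure E)).symm
  refine tendsto_of_seq_tendsto fun u hu => tendsto_finiteMeasure_of_tendsto_normalize ?_ ?_
  · have h0 := (Complex.continuous_re.tendsto _).comp ((h 0).comp hu)
    simp only [Function.comp_def, ← hmass, Complex.ofReal_re] at h0
    exact NNReal.tendsto_coe.1 h0
  · intro hne hF
    refine ProbabilityMeasure.tendsto_of_tendsto_charFun fun t => ?_
    rw [charFun_normalize F₀ hne]
    refine ((((h 0).comp hu).inv₀ ?_).mul ((h t).comp hu)).congr' ?_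
    · rw [← hmass]
      exact_mod_cast (FiniteMeasure.mass_nonzero_iff F₀).2 hne
    · filter_upwards [hF] with n hn using (charFun_normalize _ hn t).symm

theorem re_charFun (F : Measure ℝ) [IsFiniteMeasure F] (t : ℝ) :
    (charFun F t).re = ∫ u, Real.cos (t * u) ∂F := by
  have hint : Integrable (fun u : ℝ => Complex.exp (t * u * Complex.I)) F := by
    refine Integrable.of_bound (by fun_prop) 1 (ae_of_all _ fun u => ?_)
    rw [← Complex.ofReal_mul, Complex.norm_exp_ofReal_mul_I]
  rw [charFun_apply_real, ← RCLike.re_eq_complex_re, ← integral_re hint]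
  simp only [RCLike.re_eq_complex_re, ← Complex.ofReal_mul, Complex.exp_ofReal_mul_I_re]

theorem charFun_add_map_neg (G : FiniteMeasure ℝ) (t : ℝ) :
    charFun (G + G.map Neg.neg : FiniteMeasure ℝ) t =
      ((2 * ∫ u, Real.cos (t * u) ∂(G : Measure ℝ) : ℝ) : ℂ) := by
  have hneg : charFun ((G : Measure ℝ).map Neg.neg) t = charFun (G : Measure ℝ) (-t) := by
    simpa using charFun_map_mul (μ := (G : Measure ℝ)) (-1) t
  have hint (H : FiniteMeasure ℝ) :
      Integrable (fun u : ℝ => Complex.exp (inner ℝ u t * Complex.I)) (H : Measure ℝ) :=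
    Integrable.of_bound (by fun_prop) 1 (ae_of_all _ fun u => (Complex.norm_exp_ofReal_mul_I _).le)
  rw [FiniteMeasure.toMeasure_add, charFun_apply, integral_add_measure (hint G) (hint _),
    ← charFun_apply, ← charFun_apply, FiniteMeasure.toMeasure_map, hneg, charFun_neg,
    Complex.add_conj, re_charFun]

/-- The cosine transform is the characteristic function of the symmetrization, which has twice the
image measure under `|·|` as its own image. -/
theorem tendsto_map_abs_of_tendsto_integral_cos [L.IsCountablyGenerated]
    {F : ι → FiniteMeasure ℝ} {F₀ : FiniteMeasure ℝ}
    (h : ∀ t, Tendsto (fun i => ∫ u, Real.cos (t * u) ∂(F i : Measure ℝ)) L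
      (𝓝 (∫ u, Real.cos (t * u) ∂(F₀ : Measure ℝ)))) :
    Tendsto (fun i => (F i).map (|·|)) L (𝓝 (F₀.map (|·|))) := by
  have hmap (G : FiniteMeasure ℝ) :
      G.map (|·|) = (2⁻¹ : ℝ≥0) • (G + G.map Neg.neg).map (|·|) := by
    have hcomp : (G.map Neg.neg).map (|·|) = G.map (|·|) := by
      apply Subtype.ext
      simp only [FiniteMeasure.val_eq_toMeasure, FiniteMeasure.toMeasure_map]
      rw [Measure.map_map (by fun_prop) (by fun_prop)]
      simp only [Function.comp_def, abs_neg]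
    rw [FiniteMeasure.map_add (by fun_prop), hcomp, ← two_smul ℝ≥0, smul_smul,
      inv_mul_cancel₀ two_ne_zero, one_smul]
  have hsym : Tendsto (fun i => F i + (F i).map Neg.neg) L (𝓝 (F₀ + F₀.map Neg.neg)) := by
    refine tendsto_finiteMeasure_of_tendsto_charFun fun t => ?_
    simp only [charFun_add_map_neg]
    exact (Complex.continuous_ofReal.tendsto _).comp ((h t).const_mul 2)
  rw [hmap F₀]
  refine Tendsto.congr (fun i => (hmap (F i)).symm) ?_
  exact (FiniteMeasure.tendsto_map_of_tendsto_of_continuous _ _ hsym continuous_abs).const_smul _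

theorem tendsto_probabilityMeasure_of_tendsto_Ioc [L.IsCountablyGenerated]
    {P : ι → ProbabilityMeasure ℝ} {P₀ : ProbabilityMeasure ℝ}
    (h : ∀ a b, a < b → Tendsto (fun i => P i (Ioc a b)) L (𝓝 (P₀ (Ioc a b)))) :
    Tendsto P L (𝓝 P₀) := by
  refine IsPiSystem.tendsto_probabilityMeasure_of_tendsto_of_mem
    (S := {s | ∃ a b : ℝ, a < b ∧ Ioc a b = s}) ?_ ?_ ?_ ?_
  · rintro _ ⟨a, b, -, rfl⟩ _ ⟨c, d, -, rfl⟩ hne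
    rw [Ioc_inter_Ioc] at hne ⊢
    exact ⟨_, _, nonempty_Ioc.1 hne, rfl⟩
  · rintro _ ⟨a, b, -, rfl⟩
    exact measurableSet_Ioc
  · intro U hU x hx
    obtain ⟨ε, hε, hball⟩ := Metric.isOpen_iff.1 hU x hx
    refine ⟨Ioc (x - ε / 2) (x + ε / 2), ⟨_, _, by linarith, rfl⟩,
      Ioc_mem_nhds (by linarith) (by linarith), fun y hy => hball ?_⟩
    rw [Metric.mem_ball, Real.dist_eq, abs_lt]
    constructor <;> linarith [hy.1, hy.2]
  · rintro _ ⟨a, b, hab, rfl⟩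
    exact h a b hab

theorem tendsto_finiteMeasure_of_tendsto_Iic [L.IsCountablyGenerated] {F : ι → FiniteMeasure ℝ}
    {F₀ : FiniteMeasure ℝ} (h : ∀ x, Tendsto (fun i => F i (Iic x)) L (𝓝 (F₀ (Iic x))))
    (hmass : Tendsto (fun i => (F i).mass) L (𝓝 F₀.mass)) : Tendsto F L (𝓝 F₀) := by
  refine tendsto_finiteMeasure_of_tendsto_normalize hmass fun hne hF =>
    tendsto_probabilityMeasure_of_tendsto_Ioc fun a b hab => ?_
  have hIoc (G : FiniteMeasure ℝ) : G (Ioc a b) = G (Iic b) - G (Iic a) := by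
    have hunion : G (Iic a ∪ Ioc a b) = G (Iic a) + G (Ioc a b) := by
      apply NNReal.coe_injective
      push_cast
      exact measureReal_union (Iic_disjoint_Ioc le_rfl) measurableSet_Ioc
    rw [← Iic_union_Ioc_eq_Iic hab.le, hunion, add_tsub_cancel_left]
  rw [FiniteMeasure.normalize_eq_of_nonzero _ hne, hIoc]
  refine ((hmass.inv₀ ((FiniteMeasure.mass_nonzero_iff F₀).2 hne)).mul
    ((h b).sub (h a))).congr' ?_
  filter_upwards [hF] with i hi
  rw [FiniteMeasure.normalize_eq_of_nonzero _ hi, hIoc]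

end WeakConvergence

/-! ### The Tauberian step -/

section Tauberian

variable {ι : Type*} {L : Filter ι} [L.IsCountablyGenerated]

theorem tendsto_integral_exp_neg_mul_second_difference {G : ι → ℝ → ℝ} {G₀ : ℝ → ℝ} {C : ℝ}
    (hcont : ∀ i, Continuous (G i)) (hb : ∀ᶠ i in L, ∀ t, |G i t| ≤ C * (1 + t ^ 2))
    (hlim : ∀ t, Tendsto (fun i => G i t) L (𝓝 (G₀ t))) (t : ℝ) :
    Tendsto (fun i => ∫ s in Ioi 0, Real.exp (-s) * ((G i (s + t) + G i (s - t)) / 2 - G i t)) L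
      (𝓝 (∫ s in Ioi 0, Real.exp (-s) * ((G₀ (s + t) + G₀ (s - t)) / 2 - G₀ t))) := by
  refine tendsto_integral_filter_of_dominated_convergence
    (fun s => C * (2 + 2 * t ^ 2) * Real.exp (-s) + C * (Real.exp (-s) * s ^ 2)) ?_ ?_ ?_ ?_
  · refine Eventually.of_forall fun i => Continuous.aestronglyMeasurable ?_
    have := hcont i
    fun_prop
  · filter_upwards [hb] with i hi
    refine ae_of_all _ fun s => ?_
    rw [norm_mul, Real.norm_of_nonneg (Real.exp_pos _).le]
    calc Real.exp (-s) * ‖(G i (s + t) + G i (s - t)) / 2 - G i t‖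
        ≤ Real.exp (-s) * (C * (2 + 2 * t ^ 2) + C * s ^ 2) := by
          gcongr
          rw [Real.norm_eq_abs, abs_le]
          constructor <;> linarith [abs_le.1 (hi (s + t)), abs_le.1 (hi (s - t)), abs_le.1 (hi t)]
      _ = _ := by ring
  · have h0 := integrableOn_exp_neg_mul_pow 0
    simp only [pow_zero, mul_one] at h0
    exact (h0.const_mul _).add ((integrableOn_exp_neg_mul_pow 2).const_mul _)
  · exact ae_of_all _ fun s =>
      ((((hlim _).add (hlim _)).div_const 2).sub (hlim _)).const_mul _

/-- The image of `damped m` under `|·|`, as a point of the space of finite measures on the line. It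
determines both `cosTransform m` and the masses `m (Icc (-x) x)`. -/
noncomputable def radialDamped (m : Measure ℝ) [IsFiniteMeasure (damped m)] : FiniteMeasure ℝ :=
  FiniteMeasure.map (⟨damped m, inferInstance⟩ : FiniteMeasure ℝ) (|·|)

theorem toMeasure_radialDamped (m : Measure ℝ) [IsFiniteMeasure (damped m)] :
    (radialDamped m : Measure ℝ) = (damped m).map (|·|) :=
  rfl

theorem abs_preimage_Iic (x : ℝ) : (fun u : ℝ => |u|) ⁻¹' Iic x = Icc (-x) x := by
  ext u
  rw [mem_preimage, mem_Iic, mem_Icc, abs_le]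

theorem setLIntegral_radialDamped (m : Measure ℝ) [IsFiniteMeasure (damped m)] (x : ℝ) :
    ∫⁻ u in Iic x, ENNReal.ofReal (min (1 + u ^ 2) (1 + x ^ 2)) ∂(radialDamped m : Measure ℝ) =
      m (Icc (-x) x) := by
  rw [toMeasure_radialDamped, setLIntegral_map measurableSet_Iic (by fun_prop) (by fun_prop),
    abs_preimage_Iic, damped,
    setLIntegral_withDensity_eq_setLIntegral_mul _ (by fun_prop) (by fun_prop) measurableSet_Icc,
    ← setLIntegral_one]
  refine setLIntegral_congr_fun measurableSet_Icc fun u hu => ?_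
  have hux : u ^ 2 ≤ x ^ 2 := sq_le_sq' hu.1 hu.2
  rw [Pi.mul_apply, sq_abs, min_eq_left (by linarith), ← ENNReal.ofReal_mul (by positivity),
    inv_mul_cancel₀ (by positivity), ENNReal.ofReal_one]

variable {m : ι → Measure ℝ} {m₀ : Measure ℝ} [∀ i, SFinite (m i)] [SFinite m₀]
  [∀ i, IsFiniteMeasure (damped (m i))] [IsFiniteMeasure (damped m₀)]

theorem tendsto_radialDamped_of_tendsto_cosTransform {C : ℝ}
    (hb : ∀ᶠ i in L, ∀ t, cosTransform (m i) t ≤ C * (1 + t ^ 2))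
    (hlim : ∀ t, Tendsto (fun i => cosTransform (m i) t) L (𝓝 (cosTransform m₀ t))) :
    Tendsto (fun i => radialDamped (m i)) L (𝓝 (radialDamped m₀)) := by
  refine tendsto_map_abs_of_tendsto_integral_cos fun t => ?_
  simp only [FiniteMeasure.toMeasure_mk, integral_cos_damped]
  refine tendsto_integral_exp_neg_mul_second_difference (C := C)
    (fun i => continuous_cosTransform (m i)) ?_ hlim t
  filter_upwards [hb] with i hi s
  rw [abs_of_nonneg (cosTransform_nonneg _ _)]
  exact hi s

theorem tendsto_measure_Icc_of_tendsto_cosTransform {C : ℝ}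
    (hb : ∀ᶠ i in L, ∀ t, cosTransform (m i) t ≤ C * (1 + t ^ 2))
    (hlim : ∀ t, Tendsto (fun i => cosTransform (m i) t) L (𝓝 (cosTransform m₀ t))) {x : ℝ}
    (hx : m₀ ((|·|) ⁻¹' {x}) = 0) :
    Tendsto (fun i => m i (Icc (-x) x)) L (𝓝 (m₀ (Icc (-x) x))) := by
  let g : ℝ →ᵇ ℝ := .ofNormedAddCommGroup (fun u => min (1 + u ^ 2) (1 + x ^ 2)) (by fun_prop)
    (1 + x ^ 2) fun u => by
      rw [Real.norm_of_nonneg (by positivity)]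
      exact min_le_right _ _
  have hfr : radialDamped m₀ (frontier (Iic x)) = 0 := by
    rw [frontier_Iic, FiniteMeasure.null_iff_toMeasure_null, toMeasure_radialDamped,
      Measure.map_apply (by fun_prop) (measurableSet_singleton x)]
    exact withDensity_absolutelyContinuous _ _ hx
  have key := tendsto_setLIntegral_of_null_frontier
    (tendsto_radialDamped_of_tendsto_cosTransform hb hlim) g.nnrealPart measurableSet_Iic hfr
  rw [← setLIntegral_radialDamped m₀ x]
  simp only [← setLIntegral_radialDamped _ x]
  exact key

end Tauberian

/-! ### The stable spectral measure -/

/-- The measure on `(0, ∞)` with density proportional to `u ^ (1 - α)`, normalized so that its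
`cosTransform` is `|t| ^ α`. It is the scaling limit of spectral measures varying regularly at
zero. -/
noncomputable def stableMeasure (α : ℝ) : Measure ℝ :=
  (volume.restrict (Ioi 0)).withDensity fun u =>
    ENNReal.ofReal (2 * (2 - α) * Cconst α * u ^ (1 - α))

instance (α : ℝ) : SFinite (stableMeasure α) := by
  unfold stableMeasure
  infer_instance

theorem stableMeasure_abs_preimage_singleton (α x : ℝ) :
    stableMeasure α ((fun u : ℝ => |u|) ⁻¹' {x}) = 0 := by
  refine ((withDensity_absolutelyContinuous _ _).trans Measure.absolutelyContinuous_restrict)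
    (Set.Finite.measure_zero (((finite_singleton (-x)).insert x).subset fun u hu => ?_) _)
  exact eq_or_eq_neg_of_abs_eq hu

theorem integral_rpow_mul_cosKernel (α : ℝ) {t : ℝ} (ht : 0 < t) :
    ∫ u in Ioi 0, u ^ (1 - α) * cosKernel t u =
      t ^ α * ∫ u in Ioi 0, (1 - Real.cos u) * u ^ (-1 - α) := by
  have hscale := integral_comp_mul_left_Ioi
    (fun u : ℝ => (1 - Real.cos u) * u ^ (-1 - α)) 0 ht
  rw [mul_zero, smul_eq_mul, eq_inv_mul_iff_mul_eq₀ ht.ne', ← integral_const_mul] at hscale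
  rw [← hscale, ← integral_const_mul]
  refine setIntegral_congr_fun measurableSet_Ioi fun u hu => ?_
  have hu : 0 < u := hu
  rw [cosKernel_of_ne_zero _ hu.ne', Real.mul_rpow ht.le hu.le,
    show 1 - α = (-1 - α) + 2 by ring, Real.rpow_add hu, Real.rpow_two,
    show α = -(-1 - α) - 1 by ring, Real.rpow_sub ht, Real.rpow_neg ht.le, Real.rpow_one]
  have := Real.rpow_pos_of_pos ht (-1 - α)
  ring_nf
  field_simp

section StableMeasure

variable {α : ℝ} (hα : α ∈ Ioo 0 2)

include hα

theorem Cconst_pos : 0 < Cconst α := by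
  have hΓ : 0 < Real.Gamma (1 + α) := Real.Gamma_pos_of_pos (by linarith [hα.1])
  have hsin := sin_mul_pi_div_two_pos hα
  have := sub_pos.2 hα.2
  unfold Cconst
  positivity

theorem two_mul_two_sub_mul_Cconst_pos : 0 < 2 * (2 - α) * Cconst α :=
  mul_pos (mul_pos two_pos (sub_pos.2 hα.2)) (Cconst_pos hα)

theorem Cconst_mul_integral_one_sub_cos :
    2 * (2 - α) * Cconst α * ∫ u in Ioi 0, (1 - Real.cos u) * u ^ (-1 - α) = 1 := by
  have hΓ : 0 < Real.Gamma (1 + α) := Real.Gamma_pos_of_pos (by linarith [hα.1])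
  have hsin := sin_mul_pi_div_two_pos hα
  have := sub_pos.2 hα.2
  rw [integral_one_sub_cos_mul_rpow hα, Cconst]
  field_simp

theorem integral_stableMeasure (f : ℝ → ℝ) :
    ∫ u, f u ∂stableMeasure α =
      2 * (2 - α) * Cconst α * ∫ u in Ioi 0, u ^ (1 - α) * f u := by
  rw [stableMeasure, integral_withDensity_eq_integral_toReal_smul (by fun_prop)
    (ae_of_all _ fun _ => ENNReal.ofReal_lt_top), ← integral_const_mul]
  refine setIntegral_congr_fun measurableSet_Ioi fun u hu => ?_
  rw [ENNReal.toReal_ofReal (mul_nonneg (two_mul_two_sub_mul_Cconst_pos hα).le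
    (Real.rpow_nonneg (le_of_lt hu) _)), smul_eq_mul, mul_assoc]

theorem isFiniteMeasure_damped_stableMeasure : IsFiniteMeasure (damped (stableMeasure α)) := by
  have hβ : 2 - α ∈ Ioo 0 2 := ⟨by linarith [hα.2], by linarith [hα.1]⟩
  have hsin := sin_mul_pi_div_two_pos hβ
  refine isFiniteMeasure_damped (Integrable.of_integral_ne_zero ?_)
  have key := integral_rpow_div_one_add_sq hβ
  rw [show 2 - α - 1 = 1 - α by ring] at key
  simp only [integral_stableMeasure hα, ← div_eq_mul_inv, key]
  exact mul_ne_zero (two_mul_two_sub_mul_Cconst_pos hα).ne' (by positivity)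

theorem cosTransform_stableMeasure (t : ℝ) : cosTransform (stableMeasure α) t = |t| ^ α := by
  wlog ht : 0 ≤ t generalizing t
  · rw [← cosTransform_neg, this (-t) (by linarith), abs_neg]
  rw [abs_of_nonneg ht, cosTransform]
  rcases ht.eq_or_lt with rfl | ht
  · simp [cosKernel, Real.zero_rpow hα.1.ne']
  · rw [integral_stableMeasure hα, integral_rpow_mul_cosKernel α ht, mul_left_comm,
      Cconst_mul_integral_one_sub_cos hα, mul_one]

theorem stableMeasure_Icc {x : ℝ} (hx : 0 ≤ x) :
    stableMeasure α (Icc (-x) x) = ENNReal.ofReal (2 * Cconst α * x ^ (2 - α)) := by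
  have hset : Icc (-x) x ∩ Ioi 0 = Ioc 0 x := by
    ext u
    exact ⟨fun h => ⟨h.2, h.1.2⟩, fun h => ⟨⟨by linarith [h.1], h.2⟩, h.1⟩⟩
  have hexp : -1 < 1 - α := by linarith [hα.2]
  have hint : IntegrableOn (fun u : ℝ => u ^ (1 - α)) (Ioc 0 x) :=
    (intervalIntegral.intervalIntegrable_rpow' hexp).1
  rw [stableMeasure, withDensity_apply _ measurableSet_Icc,
    Measure.restrict_restrict measurableSet_Icc, hset,
    ← ofReal_integral_eq_lintegral_ofReal (hint.const_mul _), integral_const_mul,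
    ← intervalIntegral.integral_of_le hx, integral_rpow (Or.inl hexp),
    show 1 - α + 1 = 2 - α by ring, Real.zero_rpow (sub_pos.2 hα.2).ne', sub_zero]
  · have := sub_pos.2 hα.2
    congr 1
    field_simp
  · filter_upwards [ae_restrict_mem measurableSet_Ioc] with u hu
    exact mul_nonneg (two_mul_two_sub_mul_Cconst_pos hα).le (Real.rpow_nonneg hu.1.le _)

end StableMeasure

/-! ### Uniform quadratic growth -/

theorem exists_two_pow_mul {r : ℝ} (hr : 0 < r) (l : ℝ) :
    ∃ (k : ℕ) (s : ℝ), |s| < r ∧ l = 2 ^ k * s ∧ (2 ^ k) ^ 2 ≤ 1 + 4 * l ^ 2 / r ^ 2 := by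
  rcases lt_or_ge |l| r with hl | hl
  · refine ⟨0, l, hl, by simp, ?_⟩
    have : 0 ≤ 4 * l ^ 2 / r ^ 2 := by positivity
    simpa using this
  · obtain ⟨k, hk, hk'⟩ := exists_nat_pow_near ((one_le_div hr).2 hl) one_lt_two
    refine ⟨k + 1, l / 2 ^ (k + 1), ?_, by field_simp, ?_⟩
    · rw [abs_div, abs_of_pos (by positivity : (0 : ℝ) < 2 ^ (k + 1)), div_lt_iff₀ (by positivity)]
      rwa [div_lt_iff₀ hr, mul_comm] at hk'
    · calc ((2 : ℝ) ^ (k + 1)) ^ 2 = 4 * (2 ^ k) ^ 2 := by ring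
        _ ≤ 4 * (|l| / r) ^ 2 := by gcongr
        _ ≤ 1 + 4 * l ^ 2 / r ^ 2 := by rw [div_pow, sq_abs, mul_div_assoc]; linarith

section Growth

variable {G f : ℝ → ℝ}

theorem apply_two_pow_mul_le (hadd : ∀ s t, G (s + t) ≤ 2 * G s + 2 * G t) (k : ℕ) (t : ℝ) :
    G (2 ^ k * t) ≤ (2 ^ k) ^ 2 * G t := by
  induction k with
  | zero => simp
  | succ k ih =>
    calc G (2 ^ (k + 1) * t) = G (2 ^ k * t + 2 ^ k * t) := by congr 1; ring
      _ ≤ 2 * G (2 ^ k * t) + 2 * G (2 ^ k * t) := hadd _ _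
      _ ≤ 4 * ((2 ^ k) ^ 2 * G t) := by linarith
      _ = (2 ^ (k + 1)) ^ 2 * G t := by ring

/-- By Baire, the pointwise bounds `G (l * T) = O(f T)` are uniform for `l` in some ball; the
quasi-subadditivity of `G` moves that ball to the origin. -/
theorem exists_forall_abs_lt_apply_mul_le (hcont : Continuous G) (hneg : ∀ t, G (-t) = G t)
    (hadd : ∀ s t, G (s + t) ≤ 2 * G s + 2 * G t)
    (hO : ∀ l, (fun T => G (l * T)) =O[atTop] f) :
    ∃ r > 0, ∃ n : ℕ, ∀ l, |l| < r → ∀ T ≥ (n : ℝ), G (l * T) ≤ 4 * n * |f T| := by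
  let E (n : ℕ) : Set ℝ := {l | ∀ T ≥ (n : ℝ), G (l * T) ≤ n * |f T|}
  have hclosed (n : ℕ) : IsClosed (E n) := by
    simp only [E, ofPred_forall]
    exact isClosed_iInter fun T => isClosed_iInter fun _ =>
      isClosed_le (by fun_prop) continuous_const
  have hcover : ⋃ n, E n = univ := by
    refine eq_univ_of_forall fun l => ?_
    obtain ⟨c, hc⟩ := (hO l).bound
    obtain ⟨T₀, hT₀⟩ := eventually_atTop.1 hc
    obtain ⟨n, hn⟩ := exists_nat_ge (max T₀ c)
    refine mem_iUnion.2 ⟨n, fun T hT => ?_⟩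
    calc G (l * T) ≤ ‖G (l * T)‖ := Real.le_norm_self _
      _ ≤ c * ‖f T‖ := hT₀ T ((le_max_left _ _).trans (hn.trans hT))
      _ ≤ n * |f T| := by
          rw [Real.norm_eq_abs]
          gcongr
          exact (le_max_right _ _).trans hn
  obtain ⟨n, c, hc⟩ := nonempty_interior_of_iUnion_of_closed hclosed hcover
  obtain ⟨r, hr, hball⟩ := Metric.mem_nhds_iff.1 (mem_interior_iff_mem_nhds.1 hc)
  refine ⟨r, hr, n, fun l hl T hT => ?_⟩
  have hmem : c + l ∈ E n := hball (by simpa [Real.dist_eq] using hl)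
  calc G (l * T) = G ((c + l) * T + -(c * T)) := by congr 1; ring
    _ ≤ 2 * G ((c + l) * T) + 2 * G (c * T) := by simpa only [hneg] using hadd _ (-(c * T))
    _ ≤ 4 * n * |f T| := by linarith [hmem T hT, interior_subset hc T hT]

theorem exists_forall_apply_mul_le (hcont : Continuous G) (hneg : ∀ t, G (-t) = G t)
    (hadd : ∀ s t, G (s + t) ≤ 2 * G s + 2 * G t)
    (hO : ∀ l, (fun T => G (l * T)) =O[atTop] f) :
    ∃ C, ∀ᶠ T in atTop, ∀ l, G (l * T) ≤ C * (1 + l ^ 2) * |f T| := by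
  obtain ⟨r, hr, n, hbound⟩ := exists_forall_abs_lt_apply_mul_le hcont hneg hadd hO
  refine ⟨(1 + 4 / r ^ 2) * (4 * n), eventually_atTop.2 ⟨n, fun T hT l => ?_⟩⟩
  obtain ⟨k, s, hs, rfl, hk⟩ := exists_two_pow_mul hr l
  have hquad : 1 + 4 * (2 ^ k * s) ^ 2 / r ^ 2 ≤ (1 + 4 / r ^ 2) * (1 + (2 ^ k * s) ^ 2) := by
    have h4 : 0 ≤ 4 / r ^ 2 := by positivity
    rw [mul_div_right_comm]
    nlinarith [sq_nonneg (2 ^ k * s)]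
  calc G (2 ^ k * s * T) = G (2 ^ k * (s * T)) := by rw [mul_assoc]
    _ ≤ (2 ^ k) ^ 2 * G (s * T) := apply_two_pow_mul_le hadd k _
    _ ≤ (2 ^ k) ^ 2 * (4 * n * |f T|) := by
        gcongr
        exact hbound s hs T hT
    _ ≤ (1 + 4 / r ^ 2) * (1 + (2 ^ k * s) ^ 2) * (4 * n * |f T|) := by
        gcongr
        exact hk.trans hquad
    _ = _ := by ring

end Growth

/-! ### The Abelian step -/

theorem le_inv_one_add_sq_iff {t u : ℝ} (ht : t ∈ Ioo 0 1) :
    t ≤ (1 + u ^ 2)⁻¹ ↔ u ∈ Icc (-√(t⁻¹ - 1)) √(t⁻¹ - 1) := by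
  have hpos : 0 ≤ t⁻¹ - 1 := sub_nonneg.2 (one_le_inv₀ ht.1 |>.2 ht.2.le)
  rw [le_inv_comm₀ ht.1 (by positivity), mem_Icc, ← abs_le, Real.le_sqrt (abs_nonneg u) hpos,
    sq_abs, le_sub_iff_add_le']

theorem measurable_measure_inter_Icc (m : Measure ℝ) (S : Set ℝ) :
    Measurable fun v => m (S ∩ Icc (-v) v) :=
  Monotone.measurable fun _ _ h =>
    measure_mono (inter_subset_inter_right S (Icc_subset_Icc (neg_le_neg h) h))

theorem damped_apply (m : Measure ℝ) {S : Set ℝ} (hS : MeasurableSet S) :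
    damped m S = ∫⁻ t in Ioo 0 1, m (S ∩ Icc (-√(t⁻¹ - 1)) √(t⁻¹ - 1)) := by
  have hlayer := lintegral_eq_lintegral_meas_le (m.restrict S) (f := fun u : ℝ => (1 + u ^ 2)⁻¹)
    (ae_of_all _ fun u => by simp only [Pi.zero_apply]; positivity) (by fun_prop)
  rw [damped, withDensity_apply _ hS, hlayer, ← Ioc_union_Ioi_eq_Ioi zero_le_one,
    lintegral_union measurableSet_Ioi (Ioc_disjoint_Ioi le_rfl),
    setLIntegral_congr (Ioo_ae_eq_Ioc (a := (0 : ℝ)) (b := 1)).symm]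
  have htail : ∫⁻ t in Ioi 1, m.restrict S {u | t ≤ (1 + u ^ 2)⁻¹} = 0 := by
    refine (setLIntegral_congr_fun measurableSet_Ioi fun t ht => ?_).trans lintegral_zero
    have hempty : {u : ℝ | t ≤ (1 + u ^ 2)⁻¹} = ∅ := eq_empty_of_forall_notMem fun u hu =>
      (hu.trans (inv_le_one_of_one_le₀ (le_add_of_nonneg_right (sq_nonneg u)))).not_gt ht
    rw [hempty, measure_empty]
  rw [htail, add_zero]
  refine setLIntegral_congr_fun measurableSet_Ioo fun t ht => ?_
  have hset : {u : ℝ | t ≤ (1 + u ^ 2)⁻¹} = Icc (-√(t⁻¹ - 1)) √(t⁻¹ - 1) :=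
    Set.ext fun u => le_inv_one_add_sq_iff ht
  rw [hset, Measure.restrict_apply measurableSet_Icc, inter_comm]

theorem sqrt_inv_sub_one_rpow_le {γ t : ℝ} (hγ : 0 ≤ γ) (ht : t ∈ Ioo 0 1) :
    √(t⁻¹ - 1) ^ γ ≤ t ^ (-(γ / 2)) := by
  have hpos : 0 ≤ t⁻¹ - 1 := sub_nonneg.2 (one_le_inv₀ ht.1 |>.2 ht.2.le)
  rw [Real.sqrt_eq_rpow, ← Real.rpow_mul hpos, Real.rpow_neg ht.1.le, ← Real.inv_rpow ht.1.le,
    one_div_mul_eq_div]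
  exact Real.rpow_le_rpow hpos (sub_le_self _ zero_le_one) (by positivity)

theorem lintegral_one_add_rpow_lt_top {C γ : ℝ} (hγ : γ < 2) :
    ∫⁻ t in Ioo 0 1, ENNReal.ofReal (C * (1 + t ^ (-(γ / 2)))) < ⊤ := by
  have hint : IntegrableOn (fun t : ℝ => t ^ (-(γ / 2))) (Ioo 0 1) :=
    (intervalIntegral.integrableOn_Ioo_rpow_iff one_pos).2 (by linarith)
  exact (((integrableOn_const (by simp)).add hint).const_mul C).lintegral_lt_top

section Abelian

variable {ι : Type*} {L : Filter ι} [L.IsCountablyGenerated] {m : ι → Measure ℝ} {m₀ : Measure ℝ}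
  {C γ : ℝ}

theorem tendsto_damped_apply (hγ : γ ∈ Ico 0 2) (hC : 0 ≤ C)
    (hb : ∀ᶠ i in L, ∀ x > 0, m i (Icc (-x) x) ≤ ENNReal.ofReal (C * (1 + x ^ γ)))
    {S : Set ℝ} (hS : MeasurableSet S)
    (hlim : ∀ x > 0, Tendsto (fun i => m i (S ∩ Icc (-x) x)) L (𝓝 (m₀ (S ∩ Icc (-x) x)))) :
    Tendsto (fun i => damped (m i) S) L (𝓝 (damped m₀ S)) := by
  have hroot {t : ℝ} (ht : t ∈ Ioo 0 1) : 0 < √(t⁻¹ - 1) :=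
    Real.sqrt_pos.2 (sub_pos.2 (one_lt_inv₀ ht.1 |>.2 ht.2))
  simp only [damped_apply _ hS]
  refine tendsto_lintegral_filter_of_dominated_convergence
    (fun t => ENNReal.ofReal (C * (1 + t ^ (-(γ / 2)))))
    (Eventually.of_forall fun i => (measurable_measure_inter_Icc (m i) S).comp (by fun_prop)) ?_
    (lintegral_one_add_rpow_lt_top hγ.2).ne
    (ae_restrict_of_forall_mem measurableSet_Ioo fun t ht => hlim _ (hroot ht))
  filter_upwards [hb] with i hi
  refine ae_restrict_of_forall_mem measurableSet_Ioo fun t ht => ?_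
  calc m i (S ∩ Icc (-√(t⁻¹ - 1)) √(t⁻¹ - 1)) ≤ m i (Icc (-√(t⁻¹ - 1)) √(t⁻¹ - 1)) :=
        measure_mono inter_subset_right
    _ ≤ ENNReal.ofReal (C * (1 + √(t⁻¹ - 1) ^ γ)) := hi _ (hroot ht)
    _ ≤ _ := by gcongr; exact sqrt_inv_sub_one_rpow_le hγ.1 ht

variable [∀ i, IsFiniteMeasure (damped (m i))] [IsFiniteMeasure (damped m₀)]

theorem tendsto_radialDamped_of_tendsto_measure_Icc (hγ : γ ∈ Ico 0 2) (hC : 0 ≤ C)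
    (hb : ∀ᶠ i in L, ∀ x > 0, m i (Icc (-x) x) ≤ ENNReal.ofReal (C * (1 + x ^ γ)))
    (hlim : ∀ x ≥ 0, Tendsto (fun i => m i (Icc (-x) x)) L (𝓝 (m₀ (Icc (-x) x)))) :
    Tendsto (fun i => radialDamped (m i)) L (𝓝 (radialDamped m₀)) := by
  have happly (m : Measure ℝ) [IsFiniteMeasure (damped m)] {S : Set ℝ} (hS : MeasurableSet S) :
      radialDamped m S = (damped m ((|·|) ⁻¹' S)).toNNReal := by
    rw [← Measure.map_apply (by fun_prop) hS]
    rfl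
  have hdamped {S : Set ℝ} (hS : MeasurableSet S)
      (h : ∀ x > 0, Tendsto (fun i => m i ((|·|) ⁻¹' S ∩ Icc (-x) x)) L
        (𝓝 (m₀ ((|·|) ⁻¹' S ∩ Icc (-x) x)))) :
      Tendsto (fun i => radialDamped (m i) S) L (𝓝 (radialDamped m₀ S)) := by
    simp only [happly _ hS]
    exact (ENNReal.tendsto_toNNReal (measure_ne_top _ _)).comp
      (tendsto_damped_apply hγ hC hb (measurable_abs hS) h)
  refine tendsto_finiteMeasure_of_tendsto_Iic (fun x => hdamped measurableSet_Iic fun y _ => ?_)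
    (hdamped MeasurableSet.univ fun y hy => ?_)
  · rw [abs_preimage_Iic]
    simp only [Icc_inter_Icc, ← neg_inf]
    rcases le_or_gt 0 (x ⊓ y) with h | h
    · exact hlim _ h
    · simp only [Icc_eq_empty_of_lt (show x ⊓ y < -(x ⊓ y) by linarith), measure_empty]
      exact tendsto_const_nhds
  · simpa only [preimage_univ, univ_inter] using hlim y hy.le

omit [L.IsCountablyGenerated] in
theorem tendsto_cosTransform_of_tendsto_radialDamped
    (h : Tendsto (fun i => radialDamped (m i)) L (𝓝 (radialDamped m₀))) (t : ℝ) :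
    Tendsto (fun i => cosTransform (m i) t) L (𝓝 (cosTransform m₀ t)) := by
  have hcont : Continuous fun u => cosKernel t u * (1 + u ^ 2) :=
    (continuous_cosKernel_right t).mul (by fun_prop)
  let g : ℝ →ᵇ ℝ := .ofNormedAddCommGroup (fun u => cosKernel t u * (1 + u ^ 2)) hcont
    (2 + t ^ 2) fun u => by
      rw [Real.norm_of_nonneg (mul_nonneg (cosKernel_nonneg t u) (by positivity))]
      exact cosKernel_mul_one_add_sq_le t u
  have heven (u : ℝ) : cosKernel t |u| = cosKernel t u := by
    rcases abs_choice u with h | h <;> rw [h]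
    exact cosKernel_neg_right t u
  have htransform (m : Measure ℝ) [IsFiniteMeasure (damped m)] :
      cosTransform m t = ∫ u, g u ∂(radialDamped m : Measure ℝ) := by
    rw [toMeasure_radialDamped, integral_map (by fun_prop) g.continuous.aestronglyMeasurable,
      cosTransform_eq_integral_damped]
    simp only [g, BoundedContinuousFunction.coe_ofNormedAddCommGroup, heven, sq_abs]
  simp only [htransform]
  exact FiniteMeasure.tendsto_iff_forall_integral_tendsto.1 h g

end Abelian

/-! ### Spectral asymptotics of a finite measure on the line -/

theorem IsRegularlyVarying.of_tendsto_div {f g : ℝ → ℝ} {ρ c : ℝ} (hf : IsRegularlyVarying f ρ)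
    (hc : 0 < c) (hg : Tendsto (fun t => g t / f t) atTop (𝓝 c)) : IsRegularlyVarying g ρ := by
  refine ⟨?_, fun s hs => ?_⟩
  · filter_upwards [hf.1, hg.eventually_const_lt hc] with t hft hgt
    exact (div_pos_iff_of_pos_right hft).1 hgt
  · have hlim := (hf.tendsto_comp_mul_div hg hs).div hg hc.ne'
    rw [mul_div_cancel_left₀ _ hc.ne'] at hlim
    refine hlim.congr' ?_
    filter_upwards [hf.1] with t ht
    exact div_div_div_cancel_right₀ ht.ne' _ _

theorem apply_div_two_pow_le {φ : ℝ → ℝ} {q T₀ : ℝ} (hq : 0 ≤ q)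
    (hφ : ∀ T ≥ T₀, φ (T / 2) ≤ q * φ T) (hT₀ : 0 ≤ T₀) {n : ℕ} {T : ℝ} (hT : 2 ^ n * T₀ ≤ T) :
    φ (T / 2 ^ (n + 1)) ≤ q ^ (n + 1) * φ T := by
  induction n generalizing T with
  | zero => simpa using hφ T (by simpa using hT)
  | succ n ih =>
    have hT₂ : 2 ^ n * T₀ ≤ T / 2 := by rw [pow_succ] at hT; linarith
    have hpow : (1 : ℝ) ≤ 2 ^ n := one_le_pow₀ one_le_two
    have hT₁ : T₀ ≤ T := by nlinarith
    calc φ (T / 2 ^ (n + 1 + 1)) = φ (T / 2 / 2 ^ (n + 1)) := by rw [div_div, ← pow_succ']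
      _ ≤ q ^ (n + 1) * φ (T / 2) := ih hT₂
      _ ≤ q ^ (n + 1) * (q * φ T) := by gcongr; exact hφ T hT₁
      _ = q ^ (n + 1 + 1) * φ T := by ring

theorem IsRegularlyVarying.exists_forall_halving_le {φ : ℝ → ℝ} {ρ γ : ℝ}
    (hφ : IsRegularlyVarying φ ρ) (hγ : -ρ < γ) :
    ∃ T₀ > 0, ∀ T ≥ T₀, 0 < φ T ∧ φ (T / 2) ≤ 2 ^ γ * φ T := by
  have hlim : Tendsto (fun T => φ (2⁻¹ * T) / φ T) atTop (𝓝 (2 ^ (-ρ))) := by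
    simpa only [Real.inv_rpow zero_le_two, Real.rpow_neg zero_le_two] using
      hφ.2 2⁻¹ (by positivity)
  have hlt := hlim.eventually_lt_const (Real.rpow_lt_rpow_of_exponent_lt one_lt_two hγ)
  obtain ⟨T₀, hT₀⟩ := eventually_atTop.1 (hlt.and hφ.1)
  refine ⟨max T₀ 1, by positivity, fun T hT => ?_⟩
  obtain ⟨hratio, hpos⟩ := hT₀ T ((le_max_left _ _).trans hT)
  rw [div_lt_iff₀ hpos, inv_mul_eq_div] at hratio
  exact ⟨hpos, hratio.le⟩

theorem apply_div_le_rpow_mul {φ : ℝ → ℝ} {γ T₀ : ℝ} (hγ : 0 ≤ γ) (hT₀ : 0 < T₀)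
    (hanti : AntitoneOn φ (Ioi 0)) (hφ : ∀ T ≥ T₀, 0 < φ T ∧ φ (T / 2) ≤ 2 ^ γ * φ T) {s T : ℝ}
    (hs : 1 ≤ s) (hT : s * T₀ ≤ T) : φ (T / s) ≤ 2 ^ γ * s ^ γ * φ T := by
  obtain ⟨n, hn, hn'⟩ := exists_nat_pow_near hs one_lt_two
  have : 0 < s := one_pos.trans_le hs
  have hT₁ : T₀ ≤ T := by nlinarith
  have hTpos : 0 < T := hT₀.trans_le hT₁
  calc φ (T / s) ≤ φ (T / 2 ^ (n + 1)) :=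
        hanti (by simp only [mem_Ioi]; positivity) (by simp only [mem_Ioi]; positivity) (by gcongr)
    _ ≤ (2 ^ γ) ^ (n + 1) * φ T :=
        apply_div_two_pow_le (by positivity) (fun T hT => (hφ T hT).2) hT₀.le
          ((by gcongr : 2 ^ n * T₀ ≤ s * T₀).trans hT)
    _ = 2 ^ γ * (2 ^ n) ^ γ * φ T := by
        rw [pow_succ', ← Real.rpow_pow_comm zero_le_two]
    _ ≤ 2 ^ γ * s ^ γ * φ T := by
        have := (hφ T hT₁).1
        gcongr

theorem apply_div_le_div_mul_rpow_mul {φ : ℝ → ℝ} {γ B T₀ : ℝ} (hγ : 0 ≤ γ) (hT₀ : 0 < T₀)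
    (hanti : AntitoneOn φ (Ioi 0)) (hB : ∀ T > 0, φ T ≤ B)
    (hφ : ∀ T ≥ T₀, 0 < φ T ∧ φ (T / 2) ≤ 2 ^ γ * φ T) {s T : ℝ} (hT : T₀ ≤ T)
    (hs : T ≤ s * T₀) : φ (T / s) ≤ 2 ^ γ * (B / φ T₀) * s ^ γ * φ T := by
  have hTpos : 0 < T := hT₀.trans_le hT
  have hspos : 0 < s := pos_of_mul_pos_left (hTpos.trans_le hs) hT₀.le
  have hφT : 0 < φ T := (hφ T hT).1
  have hφ₀ : 0 < φ T₀ := (hφ T₀ le_rfl).1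
  have hB₀ : 0 ≤ B := hφ₀.le.trans (hB T₀ hT₀)
  have hbase := apply_div_le_rpow_mul hγ hT₀ hanti hφ ((one_le_div hT₀).2 hT)
    (div_mul_cancel₀ T hT₀.ne').le
  rw [div_div_cancel₀ hTpos.ne'] at hbase
  calc φ (T / s) ≤ B / φ T₀ * φ T₀ :=
        (hB _ (div_pos hTpos hspos)).trans_eq (div_mul_cancel₀ _ hφ₀.ne').symm
    _ ≤ B / φ T₀ * (2 ^ γ * (T / T₀) ^ γ * φ T) := by gcongr
    _ ≤ B / φ T₀ * (2 ^ γ * s ^ γ * φ T) := by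
        gcongr
        exact (div_le_iff₀ hT₀).2 hs
    _ = _ := by ring

/-- A Potter bound: at the scales `T / s` below the threshold, where regular variation says nothing,
boundedness of `φ` takes over. -/
theorem IsRegularlyVarying.exists_forall_apply_div_le {φ : ℝ → ℝ} {ρ γ B : ℝ}
    (hφ : IsRegularlyVarying φ ρ) (hanti : AntitoneOn φ (Ioi 0)) (hB : ∀ T > 0, φ T ≤ B)
    (hγ₀ : 0 ≤ γ) (hγ : -ρ < γ) :
    ∃ C ≥ 0, ∀ᶠ T in atTop, ∀ s > 0, φ (T / s) ≤ C * (1 + s ^ γ) * φ T := by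
  obtain ⟨T₀, hT₀, hhalf⟩ := hφ.exists_forall_halving_le hγ
  have hB₀ : 1 ≤ B / φ T₀ := (one_le_div (hhalf T₀ le_rfl).1).2 (hB T₀ hT₀)
  have hK : 1 ≤ 2 ^ γ * (B / φ T₀) :=
    one_le_mul_of_one_le_of_one_le (Real.one_le_rpow one_le_two hγ₀) hB₀
  refine ⟨2 ^ γ * (B / φ T₀), by positivity, ?_⟩
  filter_upwards [eventually_ge_atTop T₀] with T hT s hs
  have hTpos : 0 < T := hT₀.trans_le hT
  have hφT : 0 < φ T := (hhalf T hT).1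
  suffices φ (T / s) ≤ φ T ∨ φ (T / s) ≤ 2 ^ γ * (B / φ T₀) * s ^ γ * φ T by
    rcases this with h | h
    · refine h.trans (le_mul_of_one_le_left hφT.le (one_le_mul_of_one_le_of_one_le hK ?_))
      exact le_add_of_nonneg_right (by positivity)
    · refine h.trans ?_
      gcongr
      exact le_add_of_nonneg_left zero_le_one
  rcases le_or_gt s 1 with hs1 | hs1
  · exact .inl (hanti hTpos (div_pos hTpos hs) (le_div_self hTpos.le hs hs1))
  right
  rcases le_total (s * T₀) T with hsT | hsT
  · refine (apply_div_le_rpow_mul hγ₀ hT₀ hanti hhalf hs1.le hsT).trans ?_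
    gcongr
    exact le_mul_of_one_le_right (by positivity) hB₀
  · exact apply_div_le_div_mul_rpow_mul hγ₀ hT₀ hanti hB hhalf hT hsT

/-- The measure `μ` blown up by the factor `T` around the origin, with mass multiplied by
`c * T ^ 2`. -/
noncomputable def rescaled (μ : Measure ℝ) (c T : ℝ) : Measure ℝ :=
  ENNReal.ofReal (c * T ^ 2) • μ.map (· * T)

instance (μ : Measure ℝ) [IsFiniteMeasure μ] (c T : ℝ) : IsFiniteMeasure (rescaled μ c T) :=
  Measure.smul_finite _ ENNReal.ofReal_ne_top

theorem cosTransform_rescaled (μ : Measure ℝ) {c : ℝ} (hc : 0 ≤ c) (T l : ℝ) :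
    cosTransform (rescaled μ c T) l = c * cosTransform μ (l * T) := by
  have hmap : ∫ u, cosKernel l u ∂μ.map (· * T) = ∫ u, cosKernel l (u * T) ∂μ :=
    integral_map (by fun_prop) (continuous_cosKernel_right l).aestronglyMeasurable
  simp only [cosTransform, rescaled, integral_smul_measure, hmap, cosKernel_mul_left,
    integral_const_mul, smul_eq_mul, ENNReal.toReal_ofReal (mul_nonneg hc (sq_nonneg T)), mul_assoc]

theorem rescaled_Icc (μ : Measure ℝ) [IsFiniteMeasure μ] {c T : ℝ} (hc : 0 ≤ c) (hT : 0 < T)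
    (x : ℝ) :
    rescaled μ c T (Icc (-x) x) = ENNReal.ofReal (c * T ^ 2 * μ.real (Icc (-(x / T)) (x / T))) := by
  rw [rescaled, Measure.smul_apply, Measure.map_apply (by fun_prop) measurableSet_Icc,
    preimage_mul_const_Icc₀ _ _ hT, neg_div, smul_eq_mul,
    ENNReal.ofReal_mul (p := c * T ^ 2) (by positivity), ofReal_measureReal]

section

variable {μ : Measure ℝ} {α : ℝ} {f : ℝ → ℝ}

theorem tendsto_cosTransform_rescaled (hα : 0 < α) (hf : IsRegularlyVarying f α)
    (h : Tendsto (fun T => 2 * cosTransform μ T / f T) atTop (𝓝 1)) (l : ℝ) :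
    Tendsto (fun T => cosTransform (rescaled μ (2 / f T) T) l) atTop (𝓝 (|l| ^ α)) := by
  wlog hl : 0 ≤ l generalizing l
  · simpa only [cosTransform_neg, abs_neg] using this (-l) (by linarith)
  have hcongr : (fun T => 2 * cosTransform μ (l * T) / f T) =ᶠ[atTop]
      fun T => cosTransform (rescaled μ (2 / f T) T) l := by
    filter_upwards [hf.1] with T hT
    rw [cosTransform_rescaled μ (by positivity), div_mul_eq_mul_div]
  refine Tendsto.congr' hcongr ?_
  rcases hl.eq_or_lt with rfl | hl
  · simp [cosTransform, cosKernel, Real.zero_rpow hα.ne']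
  · simpa only [one_mul, abs_of_pos hl] using
      hf.tendsto_comp_mul_div (g := fun T => 2 * cosTransform μ T) h hl

variable [IsFiniteMeasure μ]

theorem exists_forall_cosTransform_rescaled_le (hα : 0 < α) (hf : IsRegularlyVarying f α)
    (h : Tendsto (fun T => 2 * cosTransform μ T / f T) atTop (𝓝 1)) :
    ∃ C, ∀ᶠ T in atTop, ∀ l, cosTransform (rescaled μ (2 / f T) T) l ≤ C * (1 + l ^ 2) := by
  have hO (l : ℝ) : (fun T => cosTransform μ (l * T)) =O[atTop] f := by
    refine Asymptotics.isBigO_of_div_tendsto_nhds (hf.1.mono fun T hT hT' => absurd hT' hT.ne')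
      (|l| ^ α / 2) (((tendsto_cosTransform_rescaled hα hf h l).div_const 2).congr' ?_)
    filter_upwards [hf.1] with T hT
    rw [cosTransform_rescaled μ (by positivity), Pi.div_apply]
    field_simp
  obtain ⟨C, hC⟩ := exists_forall_apply_mul_le (continuous_cosTransform μ) (cosTransform_neg μ)
    (cosTransform_add_le μ) hO
  refine ⟨2 * C, ?_⟩
  filter_upwards [hC, hf.1] with T hT hfT l
  rw [cosTransform_rescaled μ (by positivity), div_mul_eq_mul_div, div_le_iff₀ hfT]
  have := hT l
  rw [abs_of_pos hfT] at this
  linarith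

theorem rescaled_two_div_Icc {T x : ℝ} (hfT : 0 < f T) (hT : 0 < T) :
    rescaled μ (2 / f T) T (Icc (-x) x) =
      ENNReal.ofReal (2 * (μ.real (Icc (-(x / T)) (x / T)) / (f T * T ^ (-2 : ℝ)))) := by
  rw [rescaled_Icc μ (by positivity) hT, Real.rpow_neg hT.le, Real.rpow_two]
  congr 1
  field_simp

theorem tendsto_measure_Icc_inv_of_tendsto_cosTransform (hα : α ∈ Ioo 0 2)
    (hf : IsRegularlyVarying f α)
    (h : Tendsto (fun T => 2 * cosTransform μ T / f T) atTop (𝓝 1)) :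
    Tendsto (fun T => μ.real (Icc (-T⁻¹) T⁻¹) / (f T * T ^ (-2 : ℝ))) atTop (𝓝 (Cconst α)) := by
  have := isFiniteMeasure_damped_stableMeasure hα
  obtain ⟨C, hC⟩ := exists_forall_cosTransform_rescaled_le hα.1 hf h
  have key := tendsto_measure_Icc_of_tendsto_cosTransform hC (fun l =>
    (cosTransform_stableMeasure hα l).symm ▸ tendsto_cosTransform_rescaled hα.1 hf h l)
    (stableMeasure_abs_preimage_singleton α 1)
  rw [stableMeasure_Icc hα zero_le_one, Real.one_rpow, mul_one] at key
  have hreal := ((ENNReal.tendsto_toReal ENNReal.ofReal_ne_top).comp key).div_const 2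
  rw [ENNReal.toReal_ofReal (mul_pos two_pos (Cconst_pos hα)).le,
    mul_div_cancel_left₀ _ two_ne_zero] at hreal
  refine hreal.congr' ?_
  filter_upwards [hf.1, eventually_gt_atTop 0] with T hfT hT
  rw [Function.comp_apply, rescaled_two_div_Icc hfT hT, ENNReal.toReal_ofReal (by positivity),
    mul_div_cancel_left₀ _ two_ne_zero, one_div]

theorem antitoneOn_measureReal_Icc_inv (μ : Measure ℝ) [IsFiniteMeasure μ] :
    AntitoneOn (fun T : ℝ => μ.real (Icc (-T⁻¹) T⁻¹)) (Ioi 0) := by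
  intro S hS T _ hST
  have hinv : T⁻¹ ≤ S⁻¹ := inv_anti₀ hS hST
  exact measureReal_mono (Icc_subset_Icc (neg_le_neg hinv) hinv)

theorem tendsto_rescaled_Icc (hα : α ∈ Ioo 0 2) (hf : IsRegularlyVarying f α) (hμ : μ {0} = 0)
    (h : Tendsto (fun T => μ.real (Icc (-T⁻¹) T⁻¹) / (f T * T ^ (-2 : ℝ))) atTop
      (𝓝 (Cconst α))) {x : ℝ} (hx : 0 ≤ x) :
    Tendsto (fun T => rescaled μ (2 / f T) T (Icc (-x) x)) atTop
      (𝓝 (stableMeasure α (Icc (-x) x))) := by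
  have hg := hf.mul (isRegularlyVarying_rpow (-2))
  rw [stableMeasure_Icc hα hx]
  have hcongr := (hf.1.and (eventually_gt_atTop 0)).mono fun T hT =>
    (rescaled_two_div_Icc (μ := μ) (x := x) hT.1 hT.2).symm
  refine Tendsto.congr' hcongr (ENNReal.tendsto_ofReal ?_)
  rcases hx.eq_or_lt with rfl | hx
  · simp [Measure.real, hμ, Real.zero_rpow (sub_pos.2 hα.2).ne']
  · have hlim := (hg.tendsto_comp_mul_div h (inv_pos.2 hx)).const_mul 2
    rw [Real.inv_rpow hx.le, ← Real.rpow_neg hx.le, ← mul_assoc,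
      show -(α + -2) = 2 - α by ring] at hlim
    simpa only [mul_inv, inv_inv, ← div_eq_mul_inv] using hlim

theorem exists_forall_rescaled_Icc_le (hα : α ∈ Ioo 0 2) (hf : IsRegularlyVarying f α)
    (h : Tendsto (fun T => μ.real (Icc (-T⁻¹) T⁻¹) / (f T * T ^ (-2 : ℝ))) atTop
      (𝓝 (Cconst α))) :
    ∃ C ≥ 0, ∀ᶠ T in atTop, ∀ x > 0, rescaled μ (2 / f T) T (Icc (-x) x) ≤
      ENNReal.ofReal (C * (1 + x ^ (2 - α / 2))) := by
  have hg := hf.mul (isRegularlyVarying_rpow (-2))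
  obtain ⟨C, hC, hbound⟩ := (hg.of_tendsto_div (Cconst_pos hα) h).exists_forall_apply_div_le
    (antitoneOn_measureReal_Icc_inv μ) (B := μ.real univ) (γ := 2 - α / 2)
    (fun _ _ => measureReal_mono (subset_univ _)) (by linarith [hα.2]) (by linarith [hα.1])
  have hc := Cconst_pos hα
  refine ⟨2 * C * (Cconst α + 1), by positivity, ?_⟩
  filter_upwards [hbound, hf.1, eventually_gt_atTop 0, h.eventually_le_const (lt_add_one _)]
    with T hT hfT hTpos hle x hx
  rw [rescaled_two_div_Icc hfT hTpos]
  refine ENNReal.ofReal_le_ofReal ?_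
  calc 2 * (μ.real (Icc (-(x / T)) (x / T)) / (f T * T ^ (-2 : ℝ)))
      ≤ 2 * (C * (1 + x ^ (2 - α / 2)) * μ.real (Icc (-T⁻¹) T⁻¹) / (f T * T ^ (-2 : ℝ))) := by
        gcongr
        simpa only [inv_div] using hT x hx
    _ = 2 * C * (μ.real (Icc (-T⁻¹) T⁻¹) / (f T * T ^ (-2 : ℝ))) * (1 + x ^ (2 - α / 2)) := by
        ring
    _ ≤ _ := by gcongr

theorem tendsto_cosTransform_of_tendsto_measure_Icc_inv (hα : α ∈ Ioo 0 2)
    (hf : IsRegularlyVarying f α) (hμ : μ {0} = 0)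
    (h : Tendsto (fun T => μ.real (Icc (-T⁻¹) T⁻¹) / (f T * T ^ (-2 : ℝ))) atTop
      (𝓝 (Cconst α))) :
    Tendsto (fun T => 2 * cosTransform μ T / f T) atTop (𝓝 1) := by
  have := isFiniteMeasure_damped_stableMeasure hα
  obtain ⟨C, hC, hbound⟩ := exists_forall_rescaled_Icc_le hα hf h
  have hweak := tendsto_radialDamped_of_tendsto_measure_Icc
    (⟨by linarith [hα.2], by linarith [hα.1]⟩ : 2 - α / 2 ∈ Ico 0 2) hC hbound
    fun _ => tendsto_rescaled_Icc hα hf hμ h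
  have key := tendsto_cosTransform_of_tendsto_radialDamped hweak 1
  rw [cosTransform_stableMeasure hα, abs_one, Real.one_rpow] at key
  refine key.congr' ?_
  filter_upwards [hf.1] with T hT
  rw [cosTransform_rescaled μ (by positivity), one_mul, div_mul_eq_mul_div]

end

/-! ### Reduction of the variance to the imaginary axis -/

/-- The kernel `(e ^ w - w - 1) / w ^ 2` of the variance formula. -/
noncomputable def varKernel (w : ℂ) : ℂ := (Complex.exp w - w - 1) / w ^ 2

theorem norm_exp_sub_exp_im_mul_I_le {w : ℂ} (hw : w.re ≤ 0) :
    ‖Complex.exp w - Complex.exp (w.im * Complex.I)‖ ≤ |w.re| := by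
  have hfactor : Complex.exp w - Complex.exp (w.im * Complex.I) =
      Complex.exp (w.im * Complex.I) * ((Real.exp w.re - 1 : ℝ) : ℂ) := by
    conv_lhs => rw [← Complex.re_add_im w, Complex.exp_add, Complex.re_add_im]
    push_cast
    ring
  rw [hfactor, norm_mul, Complex.norm_exp_ofReal_mul_I, one_mul, Complex.norm_real,
    Real.norm_eq_abs, abs_of_nonpos hw, abs_of_nonpos (by linarith [Real.exp_le_one_iff.2 hw])]
  linarith [Real.add_one_le_exp w.re]

theorem norm_exp_mul_I_sub_one_le (q : ℝ) : ‖Complex.exp (q * Complex.I) - 1‖ ≤ |q| := by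
  rw [mul_comm]
  exact Real.norm_exp_I_mul_ofReal_sub_one_le

theorem re_varKernel_mul_I {q : ℝ} (hq : q ≠ 0) :
    (varKernel (q * Complex.I)).re = cosKernel 1 q := by
  have hden : (q * Complex.I) ^ 2 = ((-q ^ 2 : ℝ) : ℂ) := by
    rw [mul_pow, Complex.I_sq]
    push_cast
    ring
  rw [varKernel, hden, Complex.div_ofReal_re, cosKernel_of_ne_zero 1 hq, one_mul]
  simp only [Complex.sub_re, Complex.exp_ofReal_mul_I_re, Complex.re_ofReal_mul, Complex.I_re,
    Complex.one_re]
  rw [div_neg, ← neg_div]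
  ring

theorem norm_varKernel_le {w : ℂ} (hw : w.re ≤ 0) (him : |w.im| ≤ |w.re|) :
    ‖varKernel w‖ ≤ 4 * (|w.re| / ‖w‖ ^ 2) := by
  rw [varKernel, norm_div, norm_pow, ← mul_div_assoc]
  gcongr
  calc ‖Complex.exp w - w - 1‖
      = ‖(Complex.exp w - Complex.exp (w.im * Complex.I)) +
          (Complex.exp (w.im * Complex.I) - 1) - w‖ := by ring_nf
    _ ≤ |w.re| + |w.im| + (|w.re| + |w.im|) := (norm_sub_le _ _).trans (add_le_add
        (norm_add_le_of_le (norm_exp_sub_exp_im_mul_I_le hw) (norm_exp_mul_I_sub_one_le w.im))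
        (Complex.norm_le_abs_re_add_abs_im w))
    _ ≤ 4 * |w.re| := by linarith

theorem varKernel_sub_varKernel {w v : ℂ} (hw : w ≠ 0) (hv : v ≠ 0) :
    varKernel w - varKernel v = (Complex.exp w - Complex.exp v - (w - v)) / w ^ 2 -
      (Complex.exp v - 1 - v) * ((w - v) * (w + v)) / (w ^ 2 * v ^ 2) := by
  unfold varKernel
  field_simp
  ring

theorem norm_varKernel_sub_le {w : ℂ} (hw : w.re ≤ 0) (him : |w.re| ≤ |w.im|) (h0 : w.im ≠ 0) :
    ‖varKernel w - varKernel (w.im * Complex.I)‖ ≤ 8 * (|w.re| / ‖w‖ ^ 2) := by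
  have hv : (w.im * Complex.I : ℂ) ≠ 0 := by simpa using h0
  have hw0 : w ≠ 0 := by rintro rfl; exact h0 rfl
  have hwv : w - w.im * Complex.I = w.re :=
    sub_eq_iff_eq_add.2 (Complex.re_add_im w).symm
  have hnv : ‖(w.im * Complex.I : ℂ)‖ = |w.im| := by simp
  have hnre : ‖(w.re : ℂ)‖ = |w.re| := Complex.norm_real _
  have hexp := norm_sub_le_of_le (norm_exp_sub_exp_im_mul_I_le hw) hnre.le
  have haxis := norm_sub_le_of_le (norm_exp_mul_I_sub_one_le w.im) hnv.le
  have hsum := norm_add_le_of_le (Complex.norm_le_abs_re_add_abs_im w) hnv.le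
  have : 0 < ‖w‖ := norm_pos_iff.2 hw0
  have : 0 < |w.im| := abs_pos.2 h0
  rw [varKernel_sub_varKernel hw0 hv, hwv]
  refine (norm_sub_le _ _).trans ?_
  simp only [norm_div, norm_mul, norm_pow, hnv, hnre]
  calc _ ≤ (|w.re| + |w.re|) / ‖w‖ ^ 2 +
        (|w.im| + |w.im|) * (|w.re| * (3 * |w.im|)) / (‖w‖ ^ 2 * |w.im| ^ 2) := by
        gcongr
        linarith
    _ = 8 * (|w.re| / ‖w‖ ^ 2) := by field_simp; ring

/-- The part `|Re z| ≤ |Im z|` of the closed left half-plane, on which the variance kernel is close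
to its value at `i Im z`; the sets `UsetCt x` are its truncations. -/
def cone : Set ℂ := {z | 0 ≤ -z.re ∧ -z.re ≤ |z.im|}

theorem measurableSet_cone : MeasurableSet cone := by
  have hleft : MeasurableSet {z : ℂ | 0 ≤ -z.re} := measurableSet_le (by fun_prop) (by fun_prop)
  have hsector : MeasurableSet {z : ℂ | -z.re ≤ |z.im|} :=
    measurableSet_le (by fun_prop) (by fun_prop)
  exact hleft.inter hsector

theorem mul_ofReal_mem_cone_iff {z : ℂ} {T : ℝ} (hT : 0 < T) : z * T ∈ cone ↔ z ∈ cone := by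
  simp only [cone, mem_ofPred_eq, Complex.re_mul_ofReal, Complex.im_mul_ofReal, abs_mul,
    abs_of_pos hT, ← neg_mul, mul_nonneg_iff_of_pos_right hT, mul_le_mul_iff_left₀ hT]

theorem eq_zero_of_mem_cone_of_im_eq_zero {z : ℂ} (hz : z ∈ cone) (him : z.im = 0) : z = 0 := by
  have hre := hz.2
  rw [him, abs_zero] at hre
  exact Complex.ext (by simpa using le_antisymm (by linarith [hz.1]) (by linarith)) him

theorem abs_re_varKernel_sub_le {w : ℂ} (hw : w.re ≤ 0) (h0 : w ≠ 0) :
    |(varKernel w).re - cone.indicator (fun z => cosKernel 1 z.im) w| ≤ 8 * -(w⁻¹.re) := by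
  have hbound : -(w⁻¹.re) = |w.re| / ‖w‖ ^ 2 := by
    rw [Complex.inv_re, Complex.normSq_eq_norm_sq, abs_of_nonpos hw, neg_div]
  rw [hbound]
  by_cases hcone : w ∈ cone
  · have him : w.im ≠ 0 := fun h => h0 (eq_zero_of_mem_cone_of_im_eq_zero hcone h)
    rw [indicator_of_mem hcone, ← re_varKernel_mul_I him, ← Complex.sub_re]
    refine (Complex.abs_re_le_norm _).trans (norm_varKernel_sub_le hw ?_ him)
    rw [abs_of_nonpos hw]
    exact hcone.2
  · have him : |w.im| ≤ |w.re| := by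
      rw [abs_of_nonpos hw]
      exact le_of_not_ge fun h => hcone ⟨by linarith, h⟩
    rw [indicator_of_notMem hcone, sub_zero]
    refine ((Complex.abs_re_le_norm _).trans (norm_varKernel_le hw him)).trans ?_
    gcongr
    norm_num

theorem abs_re_sub_indicator_cosKernel_le {z : ℂ} (hz : z.re ≤ 0) (h0 : z ≠ 0) {T : ℝ}
    (hT : 0 < T) :
    |((Complex.exp (z * T) - z * T - 1) / z ^ 2).re -
        cone.indicator (fun z => cosKernel T z.im) z| ≤ 8 * T * -(z⁻¹.re) := by
  have hTc : (T : ℂ) ≠ 0 := Complex.ofReal_ne_zero.2 hT.ne'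
  have hkernel : (Complex.exp (z * T) - z * T - 1) / z ^ 2 = (T ^ 2 : ℝ) * varKernel (z * T) := by
    unfold varKernel
    push_cast
    field_simp
  have hindicator : cone.indicator (fun z => cosKernel T z.im) z =
      T ^ 2 * cone.indicator (fun z => cosKernel 1 z.im) (z * T) := by
    by_cases hz : z ∈ cone
    · rw [indicator_of_mem hz, indicator_of_mem ((mul_ofReal_mem_cone_iff hT).2 hz),
        Complex.im_mul_ofReal, ← cosKernel_mul_left, one_mul]
    · rw [indicator_of_notMem hz, indicator_of_notMem (mt (mul_ofReal_mem_cone_iff hT).1 hz),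
        mul_zero]
  have hscaled := abs_re_varKernel_sub_le (w := z * T)
    (by rw [Complex.re_mul_ofReal]; exact mul_nonpos_of_nonpos_of_nonneg hz hT.le)
    (mul_ne_zero h0 hTc)
  rw [hkernel, hindicator, Complex.re_ofReal_mul, ← mul_sub, abs_mul, abs_of_pos (by positivity)]
  refine (mul_le_mul_of_nonneg_left hscaled (by positivity)).trans_eq ?_
  rw [mul_inv, ← Complex.ofReal_inv, Complex.re_mul_ofReal]
  field_simp

/-- The image of `ν`, restricted to `cone`, under `Im`: the spectral measure whose `cosTransform` is
half of the variance up to an error of order `T`. -/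
noncomputable def coneSpectrum (ν : Measure ℂ) : Measure ℝ := (ν.restrict cone).map Complex.im

section

variable (ν : Measure ℂ)

instance [IsFiniteMeasure ν] : IsFiniteMeasure (coneSpectrum ν) := by
  unfold coneSpectrum
  infer_instance

theorem coneSpectrum_singleton_zero (h0 : ν {0} = 0) : coneSpectrum ν {0} = 0 := by
  rw [coneSpectrum, Measure.map_apply Complex.measurable_im (measurableSet_singleton 0),
    Measure.restrict_apply (Complex.measurable_im (measurableSet_singleton 0))]
  exact measure_mono_null (fun z hz => eq_zero_of_mem_cone_of_im_eq_zero hz.2 hz.1) h0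

theorem coneSpectrum_Icc (x : ℝ) : coneSpectrum ν (Icc (-x) x) = ν (UsetCt x) := by
  rw [coneSpectrum, Measure.map_apply Complex.measurable_im measurableSet_Icc,
    Measure.restrict_apply (Complex.measurable_im measurableSet_Icc)]
  congr 1
  ext z
  simp only [cone, UsetCt, mem_inter_iff, mem_preimage, mem_Icc, mem_ofPred_eq, abs_le (b := x)]
  tauto

theorem cosTransform_coneSpectrum (T : ℝ) :
    cosTransform (coneSpectrum ν) T = ∫ z, cone.indicator (fun z => cosKernel T z.im) z ∂ν := by
  rw [cosTransform, coneSpectrum, integral_map Complex.measurable_im.aemeasurable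
    (continuous_cosKernel_right T).aestronglyMeasurable, integral_indicator measurableSet_cone]

theorem integrable_indicator_cone_cosKernel [IsFiniteMeasure ν] (T : ℝ) :
    Integrable (cone.indicator fun z => cosKernel T z.im) ν :=
  ((integrable_cosKernel (ν.map Complex.im) T).comp_measurable Complex.measurable_im).indicator
    measurableSet_cone

variable {ν}

theorem integrable_neg_inv_re (hre : ∀ᵐ z ∂ν, z.re ≤ 0) (hς : varsigmaSq ν < ⊤) :
    Integrable (fun z : ℂ => -(z⁻¹.re)) ν := by
  refine ⟨by fun_prop, ?_⟩
  rw [hasFiniteIntegral_iff_ofReal]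
  · exact ENNReal.lt_top_of_mul_ne_top_right hς.ne two_ne_zero
  · filter_upwards [hre] with z hz
    rw [Pi.zero_apply, Complex.inv_re, ← neg_div]
    exact div_nonneg (neg_nonneg.2 hz) (Complex.normSq_nonneg z)

theorem exists_forall_abs_VarCt_sub_le [IsFiniteMeasure ν] (hre : ∀ᵐ z ∂ν, z.re ≤ 0)
    (h0 : ∀ᵐ z ∂ν, z ≠ 0) (hς : varsigmaSq ν < ⊤) :
    ∃ K, ∀ T > 0, |VarCt ν T - 2 * cosTransform (coneSpectrum ν) T| ≤ K * T := by
  have hdom (T : ℝ) := (integrable_neg_inv_re hre hς).const_mul (8 * T)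
  refine ⟨2 * (8 * ∫ z, -(z⁻¹.re) ∂ν), fun T hT => ?_⟩
  have hcone := integrable_indicator_cone_cosKernel ν T
  have hbound : ∀ᵐ z ∂ν, ‖((Complex.exp (z * T) - z * T - 1) / z ^ 2).re -
      cone.indicator (fun z => cosKernel T z.im) z‖ ≤ 8 * T * -(z⁻¹.re) := by
    filter_upwards [hre, h0] with z hz hz0
    exact abs_re_sub_indicator_cosKernel_le hz hz0 hT
  have hmeas : Measurable fun z : ℂ => ((Complex.exp (z * T) - z * T - 1) / z ^ 2).re := by
    fun_prop
  have hdiff := (hdom T).mono' (hmeas.aestronglyMeasurable.sub hcone.1) hbound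
  have hvar := (hdiff.add hcone).congr (ae_of_all _ fun z => sub_add_cancel _ _)
  have hle := norm_integral_le_of_norm_le (hdom T) hbound
  rw [integral_sub hvar hcone, integral_const_mul, Real.norm_eq_abs] at hle
  rw [VarCt, cosTransform_coneSpectrum, ← mul_sub, abs_mul, abs_two]
  linarith

theorem isEquivalent_VarCt [IsFiniteMeasure ν] (hre : ∀ᵐ z ∂ν, z.re ≤ 0) (h0 : ∀ᵐ z ∂ν, z ≠ 0)
    (hς : varsigmaSq ν < ⊤) (hinf : Tendsto (fun T => VarCt ν T / T) atTop atTop) :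
    Asymptotics.IsEquivalent atTop (fun T => 2 * cosTransform (coneSpectrum ν) T) (VarCt ν) := by
  obtain ⟨K, hK⟩ := exists_forall_abs_VarCt_sub_le hre h0 hς
  have hlin : (fun T => 2 * cosTransform (coneSpectrum ν) T - VarCt ν T) =O[atTop] fun T => T := by
    refine Asymptotics.IsBigO.of_bound K ?_
    filter_upwards [eventually_gt_atTop 0] with T hT
    rw [norm_sub_rev, Real.norm_of_nonneg hT.le]
    exact hK T hT
  refine hlin.trans_isLittleO (Asymptotics.isLittleO_of_tendsto' ?_ ?_)
  · filter_upwards [hinf.eventually_gt_atTop 0] with T hT hT0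
    simp [hT0] at hT
  · simpa only [Function.comp_def, inv_div] using tendsto_inv_atTop_zero.comp hinf

end

theorem tendsto_div_rpow_inv_iff {M h : ℝ → ℝ} {α c : ℝ} (hc : c ≠ 0) :
    Tendsto (fun x => M x / (c * x ^ (2 - α) * h (1 / x))) (𝓝[>] 0) (𝓝 1) ↔
      Tendsto (fun T => M T⁻¹ / (T ^ α * h T * T ^ (-2 : ℝ))) atTop (𝓝 c) := by
  have hratio : ∀ᶠ T : ℝ in atTop, M T⁻¹ / (T ^ α * h T * T ^ (-2 : ℝ)) =
      c * (M T⁻¹ / (c * T⁻¹ ^ (2 - α) * h (1 / T⁻¹))) := by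
    filter_upwards [eventually_gt_atTop 0] with T hT
    have hpow : T⁻¹ ^ (2 - α) = T ^ α * T ^ (-2 : ℝ) := by
      rw [Real.inv_rpow hT.le, ← Real.rpow_neg hT.le, ← Real.rpow_add hT]
      ring_nf
    rw [hpow, one_div, inv_inv, mul_div_assoc', mul_assoc c, mul_div_mul_left _ _ hc,
      mul_right_comm]
  rw [tendsto_congr' hratio, ← inv_atTop₀, ← Filter.map_inv, tendsto_map'_iff]
  simpa only [smul_eq_mul, mul_one, Function.comp_def] using
    (tendsto_const_smul_iff₀ hc (a := (1 : ℝ))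
      (f := fun T => M T⁻¹ / (c * T⁻¹ ^ (2 - α) * h (1 / T⁻¹)))).symm

theorem tendsto_cosTransform_iff_tendsto_measure_Icc_inv {μ : Measure ℝ} [IsFiniteMeasure μ]
    (h0 : μ {0} = 0) {f : ℝ → ℝ} {α : ℝ} (hα : α ∈ Ioo 0 2) (hf : IsRegularlyVarying f α) :
    Tendsto (fun T => 2 * cosTransform μ T / f T) atTop (𝓝 1) ↔
      Tendsto (fun T => μ.real (Icc (-T⁻¹) T⁻¹) / (f T * T ^ (-2 : ℝ))) atTop
        (𝓝 (Cconst α)) :=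
  ⟨tendsto_measure_Icc_inv_of_tendsto_cosTransform hα hf,
    tendsto_cosTransform_of_tendsto_measure_Icc_inv hα hf h0⟩

end

theorem continuous_time_regular_variation_iff_general
    (ν : Measure ℂ) [IsFiniteMeasure ν]
    (hsupp : ν {z : ℂ | ¬ z.re ≤ 0} = 0)
    (h0 : ν {(0 : ℂ)} = 0)
    (hς : varsigmaSq ν < ⊤)
    (hinf : Tendsto (fun T : ℝ => VarCt ν T / T) atTop atTop)
    (α : ℝ) (hα : α ∈ Set.Ioo (0:ℝ) 2)
    (h : ℝ → ℝ) (hh : IsRegularlyVarying h 0) :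
    Tendsto (fun T : ℝ => VarCt ν T / (T ^ α * h T)) atTop (𝓝 1) ↔
      Tendsto (fun x : ℝ => (ν (UsetCt x)).toReal / (Cconst α * x ^ (2 - α) * h (1/x)))
        (𝓝[>] (0:ℝ)) (𝓝 1) := by
  have hf : IsRegularlyVarying (fun T => T ^ α * h T) α := by
    simpa only [add_zero] using (isRegularlyVarying_rpow α).mul hh
  have hequiv := isEquivalent_VarCt hsupp (compl_mem_ae_iff.2 h0) hς hinf
  calc Tendsto (fun T => VarCt ν T / (T ^ α * h T)) atTop (𝓝 1)
    _ ↔ Tendsto (fun T => 2 * cosTransform (coneSpectrum ν) T / (T ^ α * h T)) atTop (𝓝 1) :=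
      (hequiv.div .refl).tendsto_nhds_iff.symm
    _ ↔ Tendsto (fun T => (coneSpectrum ν).real (Icc (-T⁻¹) T⁻¹) /
          (T ^ α * h T * T ^ (-2 : ℝ))) atTop (𝓝 (Cconst α)) :=
      tendsto_cosTransform_iff_tendsto_measure_Icc_inv (coneSpectrum_singleton_zero ν h0) hα hf
    _ ↔ _ := by
      simp only [measureReal_def, coneSpectrum_Icc]
      exact (tendsto_div_rpow_inv_iff (M := fun x => (ν (UsetCt x)).toReal)
        (Cconst_pos hα).ne').symm

/-- **Theorem 3.2 (second part).**  Let `ν` be a finite conjugation-invariant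
measure on the closed left half-plane with `ν({0}) = 0`, `ς² < ∞` and
`liminf Var(T)/T = ∞`.  For `α ∈ [1,2)` and `h` slowly varying:
`Var(T) ~ T^α h(T)` as `T → ∞` iff `ν(U_x) ~ C(α) x^{2-α} h(1/x)` as
`x → 0⁺`. -/
theorem continuous_time_regular_variation_iff
    (ν : Measure ℂ) [IsFiniteMeasure ν]
    (hsupp : ν {z : ℂ | ¬ z.re ≤ 0} = 0)
    (h0 : ν {(0 : ℂ)} = 0)
    (hconj : ∀ A : Set ℂ, MeasurableSet A → ν ((starRingEnd ℂ) ⁻¹' A) = ν A)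
    (hς : varsigmaSq ν < ⊤)
    (hinf : Tendsto (fun T : ℝ => VarCt ν T / T) atTop atTop)
    (α : ℝ) (hα : α ∈ Set.Ico (1:ℝ) 2)
    (h : ℝ → ℝ) (hh : SlowlyVaryingAtTop h) :
    Tendsto (fun T : ℝ => VarCt ν T / (T ^ α * h T)) atTop (𝓝 1) ↔
      Tendsto (fun x : ℝ => (ν (UsetCt x)).toReal / (Cconst α * x ^ (2 - α) * h (1/x)))
        (𝓝[>] (0:ℝ)) (𝓝 1) :=
  continuous_time_regular_variation_iff_general ν hsupp h0 hς hinf α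
    ⟨zero_lt_one.trans_le hα.1, hα.2⟩ h hh.isRegularlyVarying
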